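/- Let u be the bounded C^∞ solution of the problem 𝒫u = f in Ω×(0,T), u = g on ∂Ω×(0,T), u(·,0) = g(·,0) in Ω. For k ≥ 1 and 1 ≤ l ≤ I let u_l^k ∈ C^∞(cl(Ω_l×(0,T))) satisfy: 𝒫u_l^k = f in Ω_l×(0,T); the Robin transmission conditions ∂_{x_n}u_l^k(·,a_l,·) + p u_l^k(·,a_l,·) = ∂_{x_n}u_{l-1}^{k-1}(·,a_l,·) + p u_{l-1}^{k-1}(·,a_l,·) on D×(0,T) for 2 ≤ l ≤ I, and ∂_{x_n}u_l^k(·,b_l,·) + p u_l^k(·,b_l,·) = ∂_{x_n}u_{l+1}^{k-1}(·,b_l,·) + p u_{l+1}^{k-1}(·,b_l,·) on D×(0,T) for 1 ≤ l ≤ I−1; u_l^k = g on (∂Ω_l ∩ ∂Ω)×(0,T); u_l^k(·,0) = g(·,0) in Ω_l; u_1^k(·,α,·) = g(·,α,·) and u_I^k(·,β,·) = g(·,β,·) (the first iterates u_l^1 being arbitrary such smooth solutions with smooth bounded initial Robin guess h^0). Then there exists Γ > 0, depending only on p, the coefficient bounds and the decomposition, such that for every strictly positive φ ∈ C^1([0,T])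 with φ'(t) ≤ −Γ φ(t) for all t ∈ [0,T], one has lim_{k→∞} max_{1≤l≤I} sup_{cl(Ω_l)×[0,T]} ( ∂_{x_n}(u_l^k − u)(x,t) )^2 e^{2p x_n} φ(t) = 0. -/

import Mathlib

open Set Filter

/-- Spatial partial derivative `∂u/∂xᵢ` of a function `u : ℝⁿ → ℝ`. -/
noncomputable def pd1 {m : ℕ} (i : Fin m) (u : (Fin m → ℝ) → ℝ) (x : Fin m → ℝ) : ℝ :=
  fderiv ℝ u x (Pi.single i 1)

/-- Second spatial partial derivative `∂²u/∂xᵢ∂xⱼ`. -/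
noncomputable def pd2 {m : ℕ} (i j : Fin m) (u : (Fin m → ℝ) → ℝ) (x : Fin m → ℝ) : ℝ :=
  pd1 i (fun y => pd1 j u y) x

/-- The parabolic operator
`𝒫u = ∂ₜu − Σᵢⱼ aᵢⱼ(t) ∂ᵢ∂ⱼu + Σᵢ bᵢ(t) ∂ᵢu + c(t) u`. -/
noncomputable def parabolicOp {m : ℕ} (a : Fin m → Fin m → ℝ → ℝ) (b : Fin m → ℝ → ℝ)
    (c : ℝ → ℝ) (u : (Fin m → ℝ) → ℝ → ℝ) (x : Fin m → ℝ) (t : ℝ) : ℝ :=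
  deriv (fun s => u x s) t
    - ∑ i, ∑ j, a i j t * pd2 i j (fun y => u y t) x
    + ∑ i, b i t * pd1 i (fun y => u y t) x
    + c t * u x t

/-- The transformed operator `𝒫ₚε = ∂ₜε − Σᵢⱼ aᵢⱼ ∂ᵢ∂ⱼε
+ Σ_{i<n} (2p aᵢₙ + bᵢ) ∂ᵢε + (2p aₙₙ + bₙ) ∂ₙε + (c − p bₙ − p² aₙₙ) ε`,
in dimension `n+1`, the last coordinate playing the role of `xₙ`. -/
noncomputable def transOp {n : ℕ} (p : ℝ) (a : Fin (n+1) → Fin (n+1) → ℝ → ℝ)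
    (b : Fin (n+1) → ℝ → ℝ) (c : ℝ → ℝ)
    (ε : (Fin (n+1) → ℝ) → ℝ → ℝ) (x : Fin (n+1) → ℝ) (t : ℝ) : ℝ :=
  deriv (fun s => ε x s) t
    - ∑ i, ∑ j, a i j t * pd2 i j (fun y => ε y t) x
    + ∑ i ∈ Finset.univ.erase (Fin.last n),
        (2 * p * a i (Fin.last n) t + b i t) * pd1 i (fun y => ε y t) x
    + (2 * p * a (Fin.last n) (Fin.last n) t + b (Fin.last n) t) *
        pd1 (Fin.last n) (fun y => ε y t) x
    + (c t - p * b (Fin.last n) t - p ^ 2 * a (Fin.last n) (Fin.last n) t) * ε x t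

open scoped ContDiff

section Calculus

variable {n : ℕ}

/-- The `i`-th spatial unit vector of space-time. -/
noncomputable def spaceDir (i : Fin (n+1)) : (Fin (n+1) → ℝ) × ℝ := (Pi.single i 1, 0)

/-- The parabolic operator acting on functions of the space-time variable. -/
noncomputable def spaceTimeOp (A : Fin (n+1) → Fin (n+1) → ℝ → ℝ) (B : Fin (n+1) → ℝ → ℝ)
    (C : ℝ → ℝ) (F : (Fin (n+1) → ℝ) × ℝ → ℝ) (q : (Fin (n+1) → ℝ) × ℝ) : ℝ :=
  fderiv ℝ F q (0, 1)
    - ∑ i, ∑ j, A i j q.2 * fderiv ℝ (fun r => fderiv ℝ F r (spaceDir j)) q (spaceDir i)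
    + ∑ i, B i q.2 * fderiv ℝ F q (spaceDir i)
    + C q.2 * F q

theorem ContDiffOn.fderiv_apply_const {E : Type*} [NormedAddCommGroup E] [NormedSpace ℝ E]
    {O : Set E} (hO : IsOpen O) {F : E → ℝ} (hF : ContDiffOn ℝ ∞ F O) (v : E) :
    ContDiffOn ℝ ∞ (fun r => fderiv ℝ F r v) O :=
  (hF.fderiv_of_isOpen hO (m := ∞) (by simp)).clm_apply contDiffOn_const

theorem ContDiffOn.differentiableAt_of_isOpen {E : Type*} [NormedAddCommGroup E]
    [NormedSpace ℝ E] {O : Set E} (hO : IsOpen O) {F : E → ℝ} (hF : ContDiffOn ℝ ∞ F O)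
    {q : E} (hq : q ∈ O) : DifferentiableAt ℝ F q :=
  (hF.contDiffAt (hO.mem_nhds hq)).differentiableAt (by simp)

theorem fderiv_congr_on_isOpen {E : Type*} [NormedAddCommGroup E] [NormedSpace ℝ E]
    {O : Set E} (hO : IsOpen O) {F G : E → ℝ} (h : ∀ r ∈ O, F r = G r) {q : E} (hq : q ∈ O) :
    fderiv ℝ F q = fderiv ℝ G q := by
  apply Filter.EventuallyEq.fderiv_eq
  filter_upwards [hO.mem_nhds hq] with r hr using h r hr

theorem fderiv_apply_comm {E : Type*} [NormedAddCommGroup E] [NormedSpace ℝ E]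
    {O : Set E} (hO : IsOpen O) {F : E → ℝ} (hF : ContDiffOn ℝ ∞ F O) {q : E} (hq : q ∈ O)
    (v w : E) :
    fderiv ℝ (fun r => fderiv ℝ F r v) q w = fderiv ℝ (fun r => fderiv ℝ F r w) q v := by
  have hd : DifferentiableAt ℝ (fderiv ℝ F) q :=
    ((hF.fderiv_of_isOpen hO (m := ∞) (by simp)).contDiffAt (hO.mem_nhds hq)).differentiableAt
      (by simp)
  have key : ∀ v w : E, fderiv ℝ (fun r => fderiv ℝ F r v) q w = fderiv ℝ (fderiv ℝ F) q w v := by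
    intro v w
    rw [fderiv_clm_apply hd (differentiableAt_const v)]
    simp
  rw [key, key]
  exact ((hF.contDiffAt (hO.mem_nhds hq)).isSymmSndFDerivAt
    (by simpa using WithTop.coe_le_coe.2 (le_top : (2 : ℕ∞) ≤ ⊤))) w v

theorem spaceTimeOp_sub {A : Fin (n+1) → Fin (n+1) → ℝ → ℝ} {B : Fin (n+1) → ℝ → ℝ}
    {C : ℝ → ℝ} {O : Set ((Fin (n+1) → ℝ) × ℝ)} (hO : IsOpen O)
    {F G : (Fin (n+1) → ℝ) × ℝ → ℝ} (hF : ContDiffOn ℝ ∞ F O) (hG : ContDiffOn ℝ ∞ G O)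
    {q : (Fin (n+1) → ℝ) × ℝ} (hq : q ∈ O) :
    spaceTimeOp A B C (fun r => F r - G r) q = spaceTimeOp A B C F q - spaceTimeOp A B C G q := by
  have h1 : ∀ r ∈ O, ∀ v, fderiv ℝ (fun r => F r - G r) r v = fderiv ℝ F r v - fderiv ℝ G r v := by
    intro r hr v
    rw [fderiv_fun_sub (hF.differentiableAt_of_isOpen hO hr) (hG.differentiableAt_of_isOpen hO hr)]
    simp
  have h2 : ∀ i j : Fin (n+1),
      fderiv ℝ (fun r => fderiv ℝ (fun r => F r - G r) r (spaceDir j)) q (spaceDir i)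
      = fderiv ℝ (fun r => fderiv ℝ F r (spaceDir j)) q (spaceDir i)
        - fderiv ℝ (fun r => fderiv ℝ G r (spaceDir j)) q (spaceDir i) := by
    intro i j
    rw [fderiv_congr_on_isOpen hO (fun r hr => h1 r hr (spaceDir j)) hq,
      fderiv_fun_sub ((hF.fderiv_apply_const hO _).differentiableAt_of_isOpen hO hq)
        ((hG.fderiv_apply_const hO _).differentiableAt_of_isOpen hO hq)]
    simp
  simp only [spaceTimeOp, h1 q hq, h2, mul_sub, Finset.sum_sub_distrib]
  ring

theorem spaceTimeOp_neg {A : Fin (n+1) → Fin (n+1) → ℝ → ℝ} {B : Fin (n+1) → ℝ → ℝ}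
    {C : ℝ → ℝ} (F : (Fin (n+1) → ℝ) × ℝ → ℝ) (q : (Fin (n+1) → ℝ) × ℝ) :
    spaceTimeOp A B C (fun r => - F r) q = - spaceTimeOp A B C F q := by
  simp only [spaceTimeOp, fderiv_fun_neg, neg_apply, mul_neg,
    Finset.sum_neg_distrib]
  ring

theorem pd1_eq_fderiv {F : (Fin (n+1) → ℝ) × ℝ → ℝ} {x : Fin (n+1) → ℝ} {t : ℝ}
    (hF : DifferentiableAt ℝ F (x, t)) (i : Fin (n+1)) :
    pd1 i (fun y => F (y, t)) x = fderiv ℝ F (x, t) (spaceDir i) := by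
  have h := hF.hasFDerivAt.comp x (hasFDerivAt_prodMk_left (𝕜 := ℝ) x t)
  have h' : HasFDerivAt (fun y => F (y, t)) _ x := h
  simp [pd1, h'.fderiv, spaceDir]

theorem parabolicOp_eq_spaceTimeOp {A : Fin (n+1) → Fin (n+1) → ℝ → ℝ} {B : Fin (n+1) → ℝ → ℝ}
    {C : ℝ → ℝ} {S : Set (Fin (n+1) → ℝ)} {J : Set ℝ} (hS : IsOpen S) (hJ : IsOpen J)
    {F : (Fin (n+1) → ℝ) × ℝ → ℝ} (hF : ContDiffOn ℝ ∞ F (S ×ˢ J))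
    {x : Fin (n+1) → ℝ} {t : ℝ} (hx : x ∈ S) (ht : t ∈ J) :
    parabolicOp A B C (fun y s => F (y, s)) x t = spaceTimeOp A B C F (x, t) := by
  have hO := hS.prod hJ
  have h1 : ∀ y ∈ S, ∀ i, pd1 i (fun y => F (y, t)) y = fderiv ℝ F (y, t) (spaceDir i) :=
    fun y hy i => pd1_eq_fderiv (hF.differentiableAt_of_isOpen hO ⟨hy, ht⟩) i
  have h2 : ∀ i j, pd2 i j (fun y => F (y, t)) x
      = fderiv ℝ (fun r => fderiv ℝ F r (spaceDir j)) (x, t) (spaceDir i) := by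
    intro i j
    rw [← pd1_eq_fderiv ((hF.fderiv_apply_const hO _).differentiableAt_of_isOpen hO ⟨hx, ht⟩)]
    unfold pd2
    rw [pd1, fderiv_congr_on_isOpen hS (fun y hy => h1 y hy j) hx, ← pd1]
  have h3 : deriv (fun s => F (x, s)) t = fderiv ℝ F (x, t) (0, 1) := by
    have h := (hF.differentiableAt_of_isOpen hO (q := (x, t)) ⟨hx, ht⟩).hasFDerivAt.comp_hasDerivAt
      t ((hasDerivAt_const t x).prodMk (hasDerivAt_id t))
    exact h.deriv
  simp only [parabolicOp, spaceTimeOp, h1 x hx, h2, h3]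

theorem spaceTimeOp_fderiv_spaceDir {A : Fin (n+1) → Fin (n+1) → ℝ → ℝ}
    {B : Fin (n+1) → ℝ → ℝ} {C : ℝ → ℝ} {O : Set ((Fin (n+1) → ℝ) × ℝ)} (hO : IsOpen O)
    {F : (Fin (n+1) → ℝ) × ℝ → ℝ} (hF : ContDiffOn ℝ ∞ F O)
    (hpde : ∀ q ∈ O, spaceTimeOp A B C F q = 0) (m : Fin (n+1))
    {q : (Fin (n+1) → ℝ) × ℝ} (hq : q ∈ O) :
    spaceTimeOp A B C (fun r => fderiv ℝ F r (spaceDir m)) q = 0 := by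
  set v : (Fin (n+1) → ℝ) × ℝ := spaceDir m with hv
  have hv2 : ∀ s : ℝ, (q + s • v).2 = q.2 := by intro s; simp [hv, spaceDir]
  have hline : HasDerivAt (fun s : ℝ => q + s • v) v 0 := by
    simpa using ((hasDerivAt_id (0:ℝ)).smul_const v).const_add q
  have hl : ∀ G : (Fin (n+1) → ℝ) × ℝ → ℝ, ContDiffOn ℝ ∞ G O →
      HasDerivAt (fun s : ℝ => G (q + s • v)) (fderiv ℝ G q v) 0 := by
    intro G hG
    have hG' : DifferentiableAt ℝ G (q + (0:ℝ) • v) := by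
      simpa using hG.differentiableAt_of_isOpen hO hq
    have := hG'.hasFDerivAt.comp_hasDerivAt (0:ℝ) hline
    rw [zero_smul, add_zero] at this
    exact this
  have hd1 := fun w => hF.fderiv_apply_const hO w
  have hd2 := fun w z => (hd1 w).fderiv_apply_const hO z
  have hsum : HasDerivAt (fun s : ℝ => spaceTimeOp A B C F (q + s • v))
      (fderiv ℝ (fun r => fderiv ℝ F r (0, 1)) q v
        - ∑ i, ∑ j, A i j q.2 * fderiv ℝ (fun r => fderiv ℝ (fun r => fderiv ℝ F r (spaceDir j)) r
            (spaceDir i)) q v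
        + ∑ i, B i q.2 * fderiv ℝ (fun r => fderiv ℝ F r (spaceDir i)) q v
        + C q.2 * fderiv ℝ F q v) 0 := by
    simp only [spaceTimeOp, hv2]
    refine (((hl _ (hd1 _)).sub ?_).add ?_).add ((hl _ hF).const_mul _)
    · refine HasDerivAt.fun_sum fun i _ => HasDerivAt.fun_sum fun j _ => ?_
      exact (hl _ (hd2 _ _)).const_mul _
    · exact HasDerivAt.fun_sum fun i _ => (hl _ (hd1 _)).const_mul _
  have hzero : HasDerivAt (fun s : ℝ => spaceTimeOp A B C F (q + s • v)) 0 0 := by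
    refine (hasDerivAt_const (0:ℝ) (0:ℝ)).congr_of_eventuallyEq ?_
    have : Tendsto (fun s : ℝ => q + s • v) (nhds 0) (nhds q) := by
      simpa using hline.continuousAt.tendsto
    filter_upwards [this (hO.mem_nhds hq)] with s hs using hpde _ hs
  have h0 := hsum.unique hzero
  have h2 : ∀ i j : Fin (n+1),
      fderiv ℝ (fun r => fderiv ℝ (fun r => fderiv ℝ F r (spaceDir j)) r (spaceDir i)) q v
      = fderiv ℝ (fun r => fderiv ℝ (fun r => fderiv ℝ F r v) r (spaceDir j)) q (spaceDir i) := by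
    intro i j
    rw [fderiv_apply_comm hO (hd1 _) hq]
    rw [fderiv_congr_on_isOpen hO (fun r hr => fderiv_apply_comm hO hF hr (spaceDir j) v) hq]
  rw [← h0]
  simp only [spaceTimeOp, h2, fderiv_apply_comm hO hF hq _ v]

theorem fderiv_exp_mul {E : Type*} [NormedAddCommGroup E] [NormedSpace ℝ E] {F : E → ℝ} {q : E}
    (hF : DifferentiableAt ℝ F q) (L : E →L[ℝ] ℝ) (v : E) :
    fderiv ℝ (fun r => Real.exp (L r) * F r) q v
      = Real.exp (L q) * (fderiv ℝ F q v + L v * F q) := by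
  have h := (L.hasFDerivAt (x := q)).exp.mul hF.hasFDerivAt
  have h' : HasFDerivAt (fun r => Real.exp (L r) * F r) _ q := h
  rw [h'.fderiv]
  simp
  ring

/-- Conjugation by the exponential of a linear functional which only sees the last space
variable and time. -/
theorem spaceTimeOp_exp_mul {A : Fin (n+1) → Fin (n+1) → ℝ → ℝ} {B : Fin (n+1) → ℝ → ℝ}
    {C : ℝ → ℝ} (hA : ∀ i j t, A i j t = A j i t)
    {O : Set ((Fin (n+1) → ℝ) × ℝ)} (hO : IsOpen O)
    {F : (Fin (n+1) → ℝ) × ℝ → ℝ} (hF : ContDiffOn ℝ ∞ F O)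
    (L : (Fin (n+1) → ℝ) × ℝ →L[ℝ] ℝ) (p Λ : ℝ)
    (hL : ∀ i, L (spaceDir i) = if i = Fin.last n then p else 0) (hLt : L (0, 1) = -Λ)
    {q : (Fin (n+1) → ℝ) × ℝ} (hq : q ∈ O) :
    spaceTimeOp A (fun i t => B i t + 2 * p * A i (Fin.last n) t)
      (fun t => C t - p * B (Fin.last n) t - p ^ 2 * A (Fin.last n) (Fin.last n) t + Λ)
      (fun r => Real.exp (L r) * F r) q = Real.exp (L q) * spaceTimeOp A B C F q := by
  have hd1 := fun w => hF.fderiv_apply_const hO w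
  have h1 : ∀ r ∈ O, ∀ v, fderiv ℝ (fun r => Real.exp (L r) * F r) r v
      = Real.exp (L r) * (fderiv ℝ F r v + L v * F r) := fun r hr v =>
    fderiv_exp_mul (hF.differentiableAt_of_isOpen hO hr) L v
  have h2 : ∀ i j : Fin (n+1),
      fderiv ℝ (fun r => fderiv ℝ (fun r => Real.exp (L r) * F r) r (spaceDir j)) q (spaceDir i)
      = Real.exp (L q) * (fderiv ℝ (fun r => fderiv ℝ F r (spaceDir j)) q (spaceDir i)
          + L (spaceDir j) * fderiv ℝ F q (spaceDir i)
          + L (spaceDir i) * fderiv ℝ F q (spaceDir j)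
          + L (spaceDir i) * L (spaceDir j) * F q) := by
    intro i j
    have hda := (hd1 (spaceDir j)).differentiableAt_of_isOpen hO hq
    have hdb := (hF.differentiableAt_of_isOpen hO hq).const_mul (L (spaceDir j))
    rw [fderiv_congr_on_isOpen hO (fun r hr => h1 r hr (spaceDir j)) hq,
      fderiv_exp_mul (hda.fun_add hdb), fderiv_fun_add hda hdb,
      fderiv_const_mul (hF.differentiableAt_of_isOpen hO hq)]
    simp
    ring
  simp only [spaceTimeOp, h1 q hq, h2, hL, hLt]
  have e1 : ∀ i j : Fin (n+1), A i j q.2 * (Real.exp (L q) *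
      (fderiv ℝ (fun r => fderiv ℝ F r (spaceDir j)) q (spaceDir i)
          + (if j = Fin.last n then p else 0) * fderiv ℝ F q (spaceDir i)
          + (if i = Fin.last n then p else 0) * fderiv ℝ F q (spaceDir j)
          + (if i = Fin.last n then p else 0) * (if j = Fin.last n then p else 0) * F q))
      = Real.exp (L q) * (A i j q.2 * fderiv ℝ (fun r => fderiv ℝ F r (spaceDir j)) q (spaceDir i))
        + (if j = Fin.last n then Real.exp (L q) * p * (A i j q.2 * fderiv ℝ F q (spaceDir i))
            else 0)
        + (if i = Fin.last n then Real.exp (L q) * p * (A j i q.2 * fderiv ℝ F q (spaceDir j))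
            else 0)
        + (if i = Fin.last n then (if j = Fin.last n then Real.exp (L q) * p ^ 2 * A i j q.2 * F q
            else 0) else 0) := by
    intro i j
    rw [hA j i]
    split_ifs <;> ring
  have e2 : ∀ i : Fin (n+1), (B i q.2 + 2 * p * A i (Fin.last n) q.2) * (Real.exp (L q) *
      (fderiv ℝ F q (spaceDir i) + (if i = Fin.last n then p else 0) * F q))
      = Real.exp (L q) * (B i q.2 * fderiv ℝ F q (spaceDir i))
        + 2 * (Real.exp (L q) * p * (A i (Fin.last n) q.2 * fderiv ℝ F q (spaceDir i)))
        + (if i = Fin.last n then (B i q.2 + 2 * p * A i (Fin.last n) q.2) * Real.exp (L q)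
          * p * F q else 0) := by
    intro i
    split_ifs <;> ring
  simp only [e1, e2, Finset.sum_add_distrib, ← Finset.mul_sum, Finset.sum_ite_eq',
    Finset.mem_univ, if_true, Finset.sum_comm (γ := Fin (n+1))
      (f := fun i j => if i = Fin.last n then Real.exp (L q) * p
        * (A j i q.2 * fderiv ℝ F q (spaceDir j)) else 0)]
  simp only [Finset.sum_ite_irrel, Finset.sum_ite_eq', Finset.mem_univ, if_true,
    Finset.sum_const_zero]
  ring

end Calculus

section MaximumPrinciple

variable {n : ℕ}

theorem hasDerivAt_comp_line {E : Type*} [NormedAddCommGroup E] [NormedSpace ℝ E] {Z : E → ℝ}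
    {q v : E} {s : ℝ} (hZ : DifferentiableAt ℝ Z (q + s • v)) :
    HasDerivAt (fun s : ℝ => Z (q + s • v)) (fderiv ℝ Z (q + s • v) v) s := by
  have hline : HasDerivAt (fun s : ℝ => q + s • v) v s := by
    simpa using ((hasDerivAt_id s).smul_const v).const_add q
  exact hZ.hasFDerivAt.comp_hasDerivAt s hline

theorem fderiv_fderiv_apply_nonpos_of_isLocalMax {E : Type*} [NormedAddCommGroup E]
    [NormedSpace ℝ E] {O : Set E} (hO : IsOpen O) {Z : E → ℝ} (hZ : ContDiffOn ℝ ∞ Z O)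
    {q : E} (hq : q ∈ O) (v : E) (hmax : IsLocalMax (fun s : ℝ => Z (q + s • v)) 0) :
    fderiv ℝ (fun r => fderiv ℝ Z r v) q v ≤ 0 := by
  have hcont : Tendsto (fun s : ℝ => q + s • v) (nhds 0) (nhds q) := by
    have : Continuous (fun s : ℝ => q + s • v) := by fun_prop
    simpa using this.tendsto 0
  have hev : ∀ᶠ s in nhds (0:ℝ), q + s • v ∈ O := hcont (hO.mem_nhds hq)
  have hd : deriv (fun s : ℝ => Z (q + s • v)) =ᶠ[nhds 0]
      fun s => fderiv ℝ Z (q + s • v) v := by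
    filter_upwards [hev] with s hs
    exact (hasDerivAt_comp_line (hZ.differentiableAt_of_isOpen hO hs)).deriv
  have h0 : q + (0:ℝ) • v ∈ O := by simpa using hq
  have hdd : deriv (deriv (fun s : ℝ => Z (q + s • v))) 0
      = fderiv ℝ (fun r => fderiv ℝ Z r v) q v := by
    rw [hd.deriv_eq]
    have := hasDerivAt_comp_line (Z := fun r => fderiv ℝ Z r v)
      ((hZ.fderiv_apply_const hO v).differentiableAt_of_isOpen hO h0)
    rw [this.deriv, zero_smul, add_zero]
  by_contra hpos
  push Not at hpos
  rw [← hdd] at hpos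
  have hmin := isLocalMin_of_deriv_deriv_pos hpos hmax.deriv_eq_zero
    (hasDerivAt_comp_line (hZ.differentiableAt_of_isOpen hO h0)).continuousAt
  have hconst : (fun s : ℝ => Z (q + s • v)) =ᶠ[nhds 0] fun _ => Z (q + (0:ℝ) • v) := by
    filter_upwards [hmax, hmin] with s h1 h2 using le_antisymm h1 h2
  rw [hconst.deriv.deriv_eq] at hpos
  simp at hpos

theorem sum_mul_nonpos_of_posSemidef {ι : Type*} [Fintype ι] [DecidableEq ι]
    {A : Matrix ι ι ℝ} (hA : A.PosSemidef) {H : ι → ι → ℝ}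
    (hH : ∀ ξ : ι → ℝ, ∑ i, ∑ j, ξ i * ξ j * H i j ≤ 0) :
    ∑ i, ∑ j, A i j * H i j ≤ 0 := by
  obtain ⟨m, v, rfl⟩ := Matrix.posSemidef_iff_eq_sum_vecMulVec.1 hA
  have : ∑ i, ∑ j, (∑ k, Matrix.vecMulVec (v k) (star (v k))) i j * H i j
      = ∑ k, ∑ i, ∑ j, v k i * v k j * H i j := by
    simp only [Matrix.sum_apply, Matrix.vecMulVec_apply, star_trivial,
      Finset.sum_mul]
    conv_rhs => rw [Finset.sum_comm]
    exact Finset.sum_congr rfl fun i _ => Finset.sum_comm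
  rw [this]
  exact Finset.sum_nonpos fun k _ => hH (v k)

theorem spaceDir_sum (ξ : Fin (n+1) → ℝ) :
    ((ξ, 0) : (Fin (n+1) → ℝ) × ℝ) = ∑ i, ξ i • spaceDir i := by
  refine Prod.ext ?_ ?_
  · simp only [spaceDir, Prod.fst_sum, Prod.smul_mk]
    ext j
    simp [Finset.sum_apply, Pi.single_apply]
  · simp [spaceDir, Prod.snd_sum]

theorem spaceTimeOp_nonneg_of_max {A : Fin (n+1) → Fin (n+1) → ℝ → ℝ} {B : Fin (n+1) → ℝ → ℝ}
    {C : ℝ → ℝ} {O : Set ((Fin (n+1) → ℝ) × ℝ)} (hO : IsOpen O)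
    {Z : (Fin (n+1) → ℝ) × ℝ → ℝ} (hZ : ContDiffOn ℝ ∞ Z O)
    {q : (Fin (n+1) → ℝ) × ℝ} (hq : q ∈ O) (hsymm : ∀ i j, A i j q.2 = A j i q.2)
    (hpsd : ∀ ξ : Fin (n+1) → ℝ, 0 ≤ ∑ i, ∑ j, A i j q.2 * ξ i * ξ j)
    (hC : 0 ≤ C q.2) (hpos : 0 ≤ Z q)
    (hspace : ∀ᶠ r in nhds q, r.2 = q.2 → Z r ≤ Z q)
    (htime : ∀ᶠ s in nhdsWithin q.2 (Iic q.2), Z (q.1, s) ≤ Z q) :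
    0 ≤ spaceTimeOp A B C Z q := by
  have hmax : ∀ ξ : Fin (n+1) → ℝ, IsLocalMax (fun s : ℝ => Z (q + s • (ξ, 0))) 0 := by
    intro ξ
    have hcont : Tendsto (fun s : ℝ => q + s • ((ξ, 0) : (Fin (n+1) → ℝ) × ℝ)) (nhds 0)
        (nhds q) := by
      have : Continuous (fun s : ℝ => q + s • ((ξ, 0) : (Fin (n+1) → ℝ) × ℝ)) := by fun_prop
      simpa using this.tendsto 0
    filter_upwards [hcont hspace] with s hs
    simpa using hs (by simp)
  have hq0 : ∀ v : (Fin (n+1) → ℝ) × ℝ, q + (0:ℝ) • v ∈ O := by intro v; simpa using hq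
  have h1 : ∀ i, fderiv ℝ Z q (spaceDir i) = 0 := by
    intro i
    have := (hmax (Pi.single i 1)).hasDerivAt_eq_zero
      (hasDerivAt_comp_line (hZ.differentiableAt_of_isOpen hO (hq0 _)))
    simpa [spaceDir] using this
  have h2 : ∑ i, ∑ j, A i j q.2 * fderiv ℝ (fun r => fderiv ℝ Z r (spaceDir j)) q (spaceDir i)
      ≤ 0 := by
    refine sum_mul_nonpos_of_posSemidef (A := Matrix.of fun i j => A i j q.2)
      (H := fun i j => fderiv ℝ (fun r => fderiv ℝ Z r (spaceDir j)) q (spaceDir i)) ?_ ?_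
    · refine Matrix.PosSemidef.of_dotProduct_mulVec_nonneg ?_ ?_
      · ext i j
        simp [hsymm i j]
      · intro ξ
        have := hpsd ξ
        simp only [dotProduct, Matrix.mulVec, Pi.star_apply, star_trivial, Matrix.of_apply,
          Finset.mul_sum]
        refine this.trans_eq (Finset.sum_congr rfl fun i _ => Finset.sum_congr rfl fun j _ => ?_)
        ring
    · intro ξ
      have h := fderiv_fderiv_apply_nonpos_of_isLocalMax hO hZ hq (ξ, 0) (hmax ξ)
      have e : (fun r => fderiv ℝ Z r (ξ, 0)) = fun r => ∑ j, ξ j * fderiv ℝ Z r (spaceDir j) := by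
        funext r
        simp [spaceDir_sum ξ, map_sum]
      rw [e, fderiv_fun_sum (fun j _ =>
        ((hZ.fderiv_apply_const hO _).differentiableAt_of_isOpen hO hq).const_mul _)] at h
      rw [Finset.sum_comm]
      refine le_trans (le_of_eq ?_) h
      simp only [sum_apply]
      refine Finset.sum_congr rfl fun j _ => ?_
      rw [fderiv_const_mul ((hZ.fderiv_apply_const hO _).differentiableAt_of_isOpen hO hq)]
      simp only [spaceDir_sum ξ, map_sum, map_smul, smul_apply, smul_eq_mul]
      exact Finset.sum_congr rfl fun i _ => by ring
  have h3 : 0 ≤ fderiv ℝ Z q (0, 1) := by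
    have hd : HasDerivAt (fun s => Z (q.1, s)) (fderiv ℝ Z q (0, 1)) q.2 :=
      (hZ.differentiableAt_of_isOpen hO hq).hasFDerivAt.comp_hasDerivAt q.2
        ((hasDerivAt_const q.2 q.1).prodMk (hasDerivAt_id q.2))
    have hs := (hasDerivWithinAt_iff_tendsto_slope' (s := Iio q.2) (by simp)).1
      hd.hasDerivWithinAt
    refine ge_of_tendsto hs ?_
    filter_upwards [nhdsWithin_mono q.2 Iio_subset_Iic_self htime, self_mem_nhdsWithin]
      with s hs1 hs2
    rw [slope_def_field]
    exact div_nonneg_of_nonpos (sub_nonpos.2 hs1) (sub_nonpos.2 (le_of_lt hs2))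
  simp only [spaceTimeOp, h1, mul_zero, Finset.sum_const_zero, add_zero]
  have := mul_nonneg hC hpos
  linarith

/-- The cylinder `D × (a, b)`. -/
def cylinder (D : Set (Fin n → ℝ)) (a b : ℝ) : Set (Fin (n+1) → ℝ) :=
  {x | Fin.init x ∈ D ∧ x (Fin.last n) ∈ Ioo a b}

theorem continuous_finInit : Continuous (fun x : Fin (n+1) → ℝ => (Fin.init x : Fin n → ℝ)) :=
  continuous_pi fun i => continuous_apply i.castSucc

theorem isOpen_cylinder {D : Set (Fin n → ℝ)} (hD : IsOpen D) (a b : ℝ) :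
    IsOpen (cylinder D a b) :=
  (hD.preimage continuous_finInit).inter (isOpen_Ioo.preimage (continuous_apply (Fin.last n)))

theorem continuous_finSnoc :
    Continuous (fun q : (Fin n → ℝ) × ℝ => (Fin.snoc q.1 q.2 : Fin (n+1) → ℝ)) := by
  refine continuous_pi fun i => ?_
  refine Fin.lastCases ?_ (fun j => ?_) i
  · simpa using continuous_snd
  · simp only [Fin.snoc_castSucc]
    fun_prop

theorem mem_closure_cylinder {D : Set (Fin n → ℝ)} {a b : ℝ} (hab : a < b)
    {x : Fin (n+1) → ℝ} :
    x ∈ closure (cylinder D a b) ↔ Fin.init x ∈ closure D ∧ x (Fin.last n) ∈ Icc a b := by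
  constructor
  · intro hx
    have hc : IsClosed {x : Fin (n+1) → ℝ | (Fin.init x : Fin n → ℝ) ∈ closure D
        ∧ x (Fin.last n) ∈ Icc a b} :=
      (isClosed_closure.preimage continuous_finInit).inter
        (isClosed_Icc.preimage (continuous_apply (Fin.last n)))
    refine closure_minimal (fun y hy => ?_) hc hx
    exact ⟨subset_closure hy.1, Ioo_subset_Icc_self hy.2⟩
  · rintro ⟨h1, h2⟩
    have hmem : (Fin.init x, x (Fin.last n)) ∈ closure (D ×ˢ Ioo a b) := by
      rw [closure_prod_eq, closure_Ioo hab.ne]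
      exact ⟨h1, h2⟩
    have hmaps : MapsTo (fun q : (Fin n → ℝ) × ℝ => (Fin.snoc q.1 q.2 : Fin (n+1) → ℝ))
        (D ×ˢ Ioo a b) (cylinder D a b) := by
      rintro ⟨X, s⟩ ⟨hX, hs⟩
      exact ⟨by simpa using hX, by simpa using hs⟩
    have := hmaps.closure continuous_finSnoc hmem
    simpa using this

theorem isCompact_closure_cylinder {D : Set (Fin n → ℝ)} (hD : Bornology.IsBounded D)
    {a b : ℝ} (hab : a < b) : IsCompact (closure (cylinder D a b)) := by
  have hDc : IsCompact (closure D) := hD.isCompact_closure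
  refine ((hDc.prod (isCompact_Icc (a := a) (b := b))).image continuous_finSnoc).of_isClosed_subset
    isClosed_closure fun x hx => ?_
  rw [mem_closure_cylinder hab] at hx
  exact ⟨(Fin.init x, x (Fin.last n)), hx, by simp⟩

theorem update_last_mem_closure_cylinder {D : Set (Fin n → ℝ)} {a b : ℝ} (hab : a < b)
    {x : Fin (n+1) → ℝ} (hx : x ∈ closure (cylinder D a b)) {s : ℝ} (hs : s ∈ Icc a b) :
    Function.update x (Fin.last n) s ∈ closure (cylinder D a b) := by
  rw [mem_closure_cylinder hab] at hx ⊢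
  simpa using ⟨hx.1, hs⟩

theorem nonpos_of_hasDerivWithinAt_left_of_max {g : ℝ → ℝ} {a b d : ℝ} (hab : a < b)
    (hg : HasDerivWithinAt g d (Icc a b) a) (hmax : ∀ s ∈ Icc a b, g s ≤ g a) : d ≤ 0 := by
  have hs := (hasDerivWithinAt_iff_tendsto_slope' (s := Ioo a b) (by simp)).1
    (hg.mono Ioo_subset_Icc_self)
  have : (nhdsWithin a (Ioo a b)).NeBot := left_nhdsWithin_Ioo_neBot hab
  refine le_of_tendsto hs ?_
  filter_upwards [self_mem_nhdsWithin] with s hs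
  rw [slope_def_field]
  exact div_nonpos_of_nonpos_of_nonneg (sub_nonpos.2 (hmax s (Ioo_subset_Icc_self hs)))
    (sub_nonneg.2 hs.1.le)

theorem nonneg_of_hasDerivWithinAt_right_of_max {g : ℝ → ℝ} {a b d : ℝ} (hab : a < b)
    (hg : HasDerivWithinAt g d (Icc a b) b) (hmax : ∀ s ∈ Icc a b, g s ≤ g b) : 0 ≤ d := by
  have hs := (hasDerivWithinAt_iff_tendsto_slope' (s := Ioo a b) (by simp)).1
    (hg.mono Ioo_subset_Icc_self)
  have : (nhdsWithin b (Ioo a b)).NeBot := right_nhdsWithin_Ioo_neBot hab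
  refine ge_of_tendsto hs ?_
  filter_upwards [self_mem_nhdsWithin] with s hs
  rw [slope_def_field]
  exact div_nonneg_of_nonpos (sub_nonpos.2 (hmax s (Ioo_subset_Icc_self hs)))
    (sub_nonpos.2 hs.2.le)

/-- Weak maximum principle on `D × (a, b) × (0, T)` with mixed conditions on the two faces. -/
theorem le_zero_of_spaceTimeOp_neg {A : Fin (n+1) → Fin (n+1) → ℝ → ℝ} {B : Fin (n+1) → ℝ → ℝ}
    {C : ℝ → ℝ} {T : ℝ} (hsymm : ∀ i j t, A i j t = A j i t)
    (hpsd : ∀ t ∈ Ioo 0 T, ∀ ξ : Fin (n+1) → ℝ, 0 ≤ ∑ i, ∑ j, A i j t * ξ i * ξ j)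
    (hC : ∀ t ∈ Ioo 0 T, 0 ≤ C t)
    {D : Set (Fin n → ℝ)} (hDo : IsOpen D) (hDb : Bornology.IsBounded D) {a b : ℝ} (hab : a < b)
    {Z : (Fin (n+1) → ℝ) × ℝ → ℝ}
    (hcont : ContinuousOn Z (closure (cylinder D a b) ×ˢ Icc 0 T))
    (hZ : ContDiffOn ℝ ∞ Z (cylinder D a b ×ˢ Ioo 0 T))
    (hop : ∀ q ∈ cylinder D a b ×ˢ Ioo 0 T, spaceTimeOp A B C Z q < 0)
    (hinit : ∀ x ∈ closure (cylinder D a b), Z (x, 0) ≤ 0)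
    (hlat : ∀ x ∈ closure (cylinder D a b), Fin.init x ∉ D → ∀ t ∈ Ioo 0 T, Z (x, t) ≤ 0)
    (hleft : ∀ x : Fin (n+1) → ℝ, Fin.init x ∈ D → x (Fin.last n) = a → ∀ t ∈ Ioo 0 T, Z (x, t) ≤ 0 ∨
      ∃ d > 0, HasDerivWithinAt (fun s => Z (Function.update x (Fin.last n) s, t)) d (Icc a b) a)
    (hright : ∀ x : Fin (n+1) → ℝ, Fin.init x ∈ D → x (Fin.last n) = b → ∀ t ∈ Ioo 0 T, Z (x, t) ≤ 0 ∨
      ∃ d < 0, HasDerivWithinAt (fun s => Z (Function.update x (Fin.last n) s, t)) d (Icc a b) b) :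
    ∀ x ∈ closure (cylinder D a b), ∀ t ∈ Icc 0 T, Z (x, t) ≤ 0 := by
  have main : ∀ x ∈ closure (cylinder D a b), ∀ t ∈ Ico 0 T, Z (x, t) ≤ 0 := by
    intro x hx T' hT'
    rcases hT'.1.eq_or_lt with h0 | hT'0
    · rw [← h0]; exact hinit x hx
    have hsub : closure (cylinder D a b) ×ˢ Icc 0 T' ⊆ closure (cylinder D a b) ×ˢ Icc 0 T :=
      prod_mono_right (Icc_subset_Icc_right hT'.2.le)
    obtain ⟨⟨x₀, t₀⟩, ⟨hx₀, ht₀⟩, hmax⟩ := ((isCompact_closure_cylinder hDb hab).prod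
      (isCompact_Icc (a := (0:ℝ)) (b := T'))).exists_isMaxOn ⟨(x, T'), hx, hT'.1, le_rfl⟩
      (hcont.mono hsub)
    simp only at hx₀ ht₀
    have hmax' : ∀ y ∈ closure (cylinder D a b), ∀ s ∈ Icc 0 T', Z (y, s) ≤ Z (x₀, t₀) :=
      fun y hy s hs => hmax (show (y, s) ∈ closure (cylinder D a b) ×ˢ Icc 0 T' from ⟨hy, hs⟩)
    by_contra hneg
    push Not at hneg
    have hpos : 0 < Z (x₀, t₀) := hneg.trans_le (hmax' x hx T' ⟨hT'.1, le_rfl⟩)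
    have ht₀0 : 0 < t₀ := by
      rcases ht₀.1.eq_or_lt with h | h
      · rw [← h] at hpos; exact absurd (hinit x₀ hx₀) hpos.not_ge
      · exact h
    have ht₀T : t₀ ∈ Ioo 0 T := ⟨ht₀0, ht₀.2.trans_lt hT'.2⟩
    have hx₀D : Fin.init x₀ ∈ D := by
      by_contra h
      exact absurd (hlat x₀ hx₀ h t₀ ht₀T) hpos.not_ge
    have hx₀' := (mem_closure_cylinder hab).1 hx₀
    have hx₀a : x₀ (Fin.last n) ≠ a := by
      intro h
      rcases hleft x₀ hx₀D h t₀ ht₀T with h' | ⟨d, hd, hder⟩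
      · exact absurd h' hpos.not_ge
      · refine absurd (nonpos_of_hasDerivWithinAt_left_of_max hab hder fun s hs => ?_) hd.not_ge
        have := hmax' _ (update_last_mem_closure_cylinder hab hx₀ hs) t₀ ht₀
        simpa [← h] using this
    have hx₀b : x₀ (Fin.last n) ≠ b := by
      intro h
      rcases hright x₀ hx₀D h t₀ ht₀T with h' | ⟨d, hd, hder⟩
      · exact absurd h' hpos.not_ge
      · refine absurd (nonneg_of_hasDerivWithinAt_right_of_max hab hder fun s hs => ?_) hd.not_ge
        have := hmax' _ (update_last_mem_closure_cylinder hab hx₀ hs) t₀ ht₀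
        simpa [← h] using this
    have hx₀c : x₀ ∈ cylinder D a b :=
      ⟨hx₀D, lt_of_le_of_ne hx₀'.2.1 hx₀a.symm, lt_of_le_of_ne hx₀'.2.2 hx₀b⟩
    refine absurd (spaceTimeOp_nonneg_of_max (A := A) (B := B) (C := C)
      ((isOpen_cylinder hDo a b).prod isOpen_Ioo) hZ
      (q := (x₀, t₀)) ⟨hx₀c, ht₀T⟩ (fun i j => hsymm i j _) (hpsd t₀ ht₀T) (hC t₀ ht₀T) hpos.le
      ?_ ?_) (hop (x₀, t₀) ⟨hx₀c, ht₀T⟩).not_ge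
    · have : ∀ᶠ r : (Fin (n+1) → ℝ) × ℝ in nhds (x₀, t₀), r.1 ∈ cylinder D a b :=
        continuous_fst.continuousAt.eventually ((isOpen_cylinder hDo a b).mem_nhds hx₀c)
      filter_upwards [this] with r hr hr2
      have := hmax' r.1 (subset_closure hr) t₀ ht₀
      rw [show r = (r.1, t₀) from Prod.ext rfl hr2]
      exact this
    · filter_upwards [self_mem_nhdsWithin, mem_nhdsWithin_of_mem_nhds (Ioi_mem_nhds ht₀0)]
        with s hs1 hs2
      exact hmax' x₀ hx₀ s ⟨le_of_lt hs2, le_trans hs1 ht₀.2⟩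
  intro x hx t ht
  rcases ht.2.lt_or_eq with h | h
  · exact main x hx t ⟨ht.1, h⟩
  rcases ht.1.eq_or_lt with h0 | h0
  · rw [← h0]; exact hinit x hx
  subst h
  have hc : ContinuousWithinAt (fun s => Z (x, s)) (Ico 0 t) t := by
    have : ContinuousWithinAt (fun s => Z (x, s)) (Icc 0 t) t :=
      (hcont (x, t) ⟨hx, ht⟩).comp (f := fun s => (x, s))
        (by fun_prop : Continuous fun s : ℝ => (x, s)).continuousWithinAt
        (fun s hs => ⟨hx, hs⟩)
    exact this.mono Ico_subset_Icc_self
  have hmem : t ∈ closure (Ico 0 t) := by rw [closure_Ico h0.ne]; exact ht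
  exact hc.closure_le hmem continuousWithinAt_const (fun s hs => main x hx s hs)

end MaximumPrinciple

section Comparison

variable {n : ℕ}

theorem fderiv_comp_last {w : ℝ → ℝ} {d : ℝ} {q : (Fin (n+1) → ℝ) × ℝ}
    (hw : HasDerivAt w d (q.1 (Fin.last n))) (v : (Fin (n+1) → ℝ) × ℝ) :
    fderiv ℝ (fun r : (Fin (n+1) → ℝ) × ℝ => w (r.1 (Fin.last n))) q v
      = d * v.1 (Fin.last n) := by
  have hl : HasFDerivAt (fun r : (Fin (n+1) → ℝ) × ℝ => r.1 (Fin.last n))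
      ((ContinuousLinearMap.proj (R := ℝ) (φ := fun _ : Fin (n+1) => ℝ) (Fin.last n)).comp
        (ContinuousLinearMap.fst ℝ (Fin (n+1) → ℝ) ℝ)) q :=
    ((ContinuousLinearMap.proj (R := ℝ) (φ := fun _ : Fin (n+1) => ℝ) (Fin.last n)).comp
        (ContinuousLinearMap.fst ℝ (Fin (n+1) → ℝ) ℝ)).hasFDerivAt
  have h := hw.comp_hasFDerivAt q hl
  have h' : HasFDerivAt (fun r : (Fin (n+1) → ℝ) × ℝ => w (r.1 (Fin.last n))) _ q := h
  rw [h'.fderiv]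
  simp

theorem spaceTimeOp_comp_last {A : Fin (n+1) → Fin (n+1) → ℝ → ℝ} {B : Fin (n+1) → ℝ → ℝ}
    {C : ℝ → ℝ} {w w₁ w₂ : ℝ → ℝ} (hw : ∀ s, HasDerivAt w (w₁ s) s)
    (hw₁ : ∀ s, HasDerivAt w₁ (w₂ s) s) (q : (Fin (n+1) → ℝ) × ℝ) :
    spaceTimeOp A B C (fun r => w (r.1 (Fin.last n))) q
      = - (A (Fin.last n) (Fin.last n) q.2 * w₂ (q.1 (Fin.last n)))
        + B (Fin.last n) q.2 * w₁ (q.1 (Fin.last n)) + C q.2 * w (q.1 (Fin.last n)) := by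
  have h1 : ∀ r v, fderiv ℝ (fun r : (Fin (n+1) → ℝ) × ℝ => w (r.1 (Fin.last n))) r v
      = w₁ (r.1 (Fin.last n)) * v.1 (Fin.last n) := fun r v => fderiv_comp_last (hw _) v
  have h2 : ∀ i j : Fin (n+1), fderiv ℝ (fun r => fderiv ℝ (fun r : (Fin (n+1) → ℝ) × ℝ =>
      w (r.1 (Fin.last n))) r (spaceDir j)) q (spaceDir i)
      = if i = Fin.last n then (if j = Fin.last n then w₂ (q.1 (Fin.last n)) else 0) else 0 := by
    intro i j
    simp only [h1]
    rw [fderiv_comp_last (w := fun s => w₁ s * (spaceDir j).1 (Fin.last n))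
      ((hw₁ _).mul_const _)]
    simp only [spaceDir, Pi.single_apply, eq_comm (a := Fin.last n)]
    split_ifs <;> simp
  unfold spaceTimeOp
  simp only [h2]
  simp only [h1]
  simp [spaceDir, Pi.single_apply]

/-- Symmetric coefficients whose quadratic form is nonnegative on `(0, T)`. -/
structure DegenerateElliptic (A : Fin (n+1) → Fin (n+1) → ℝ → ℝ) (T : ℝ) : Prop where
  symm : ∀ i j t, A i j t = A j i t
  nonneg : ∀ t ∈ Ioo 0 T, ∀ ξ : Fin (n+1) → ℝ, 0 ≤ ∑ i, ∑ j, A i j t * ξ i * ξ j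

/-- A nonnegative smooth function of the last variable, with its first two derivatives, which is a
strict supersolution of the operator on `(a, b) × (0, T)`. -/
structure Barrier (A : Fin (n+1) → Fin (n+1) → ℝ → ℝ) (B : Fin (n+1) → ℝ → ℝ) (C : ℝ → ℝ)
    (T a b : ℝ) (w w₁ w₂ : ℝ → ℝ) : Prop where
  smooth : ContDiff ℝ ∞ w
  hasDerivAt : ∀ s, HasDerivAt w (w₁ s) s
  hasDerivAt' : ∀ s, HasDerivAt w₁ (w₂ s) s
  nonneg : ∀ s ∈ Icc a b, 0 ≤ w s
  super : ∀ t ∈ Ioo 0 T, ∀ s ∈ Ioo a b,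
    0 < - (A (Fin.last n) (Fin.last n) t * w₂ s) + B (Fin.last n) t * w₁ s + C t * w s

theorem Barrier.const_mul {A : Fin (n+1) → Fin (n+1) → ℝ → ℝ} {B : Fin (n+1) → ℝ → ℝ}
    {C : ℝ → ℝ} {T a b : ℝ} {w w₁ w₂ : ℝ → ℝ} (h : Barrier A B C T a b w w₁ w₂) {m : ℝ}
    (hm : 0 < m) :
    Barrier A B C T a b (fun s => m * w s) (fun s => m * w₁ s) (fun s => m * w₂ s) where
  smooth := contDiff_const.mul h.smooth
  hasDerivAt s := (h.hasDerivAt s).const_mul m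
  hasDerivAt' s := (h.hasDerivAt' s).const_mul m
  nonneg s hs := mul_nonneg hm.le (h.nonneg s hs)
  super t ht s hs := by
    have := mul_pos hm (h.super t ht s hs)
    linarith

/-- A solution of the homogeneous equation with zero initial and lateral data. -/
structure HomogeneousSolution (A : Fin (n+1) → Fin (n+1) → ℝ → ℝ) (B : Fin (n+1) → ℝ → ℝ)
    (C : ℝ → ℝ) (T : ℝ) (D : Set (Fin n → ℝ)) (a b : ℝ) (G : (Fin (n+1) → ℝ) × ℝ → ℝ) :
    Prop where
  cont : ContinuousOn G (closure (cylinder D a b) ×ˢ Icc 0 T)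
  smooth : ContDiffOn ℝ ∞ G (cylinder D a b ×ˢ Ioo 0 T)
  pde : ∀ q ∈ cylinder D a b ×ˢ Ioo 0 T, spaceTimeOp A B C G q = 0
  initial : ∀ x ∈ closure (cylinder D a b), G (x, 0) = 0
  lateral : ∀ x ∈ closure (cylinder D a b), Fin.init x ∉ D → ∀ t ∈ Ioo 0 T, G (x, t) = 0

theorem HomogeneousSolution.neg {A : Fin (n+1) → Fin (n+1) → ℝ → ℝ} {B : Fin (n+1) → ℝ → ℝ}
    {C : ℝ → ℝ} {T : ℝ} {D : Set (Fin n → ℝ)} {a b : ℝ} {G : (Fin (n+1) → ℝ) × ℝ → ℝ}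
    (h : HomogeneousSolution A B C T D a b G) :
    HomogeneousSolution A B C T D a b (fun q => - G q) where
  cont := h.cont.neg
  smooth := h.smooth.neg
  pde q hq := by rw [spaceTimeOp_neg, h.pde q hq, neg_zero]
  initial x hx := by rw [h.initial x hx, neg_zero]
  lateral x hx hxD t ht := by rw [h.lateral x hx hxD t ht, neg_zero]

/-- `V` is the derivative of `F` in the last variable, up to the boundary. -/
def HasLastDeriv (T : ℝ) (D : Set (Fin n → ℝ)) (a b : ℝ)
    (F V : (Fin (n+1) → ℝ) × ℝ → ℝ) : Prop :=
  ∀ x ∈ closure (cylinder D a b), ∀ t ∈ Icc 0 T,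
    HasDerivWithinAt (fun s => F (Function.update x (Fin.last n) s, t)) (V (x, t)) (Icc a b)
      (x (Fin.last n))

variable {A : Fin (n+1) → Fin (n+1) → ℝ → ℝ} {B : Fin (n+1) → ℝ → ℝ} {C : ℝ → ℝ} {T : ℝ}
  {D : Set (Fin n → ℝ)} {a b : ℝ} {w w₁ w₂ : ℝ → ℝ} {G F V : (Fin (n+1) → ℝ) × ℝ → ℝ}

theorem HomogeneousSolution.le_barrier (hA : DegenerateElliptic A T)
    (hC : ∀ t ∈ Ioo 0 T, 0 ≤ C t) (hDo : IsOpen D) (hDb : Bornology.IsBounded D) (hab : a < b)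
    (hG : HomogeneousSolution A B C T D a b G) (hw : Barrier A B C T a b w w₁ w₂)
    (hleft : ∀ x : Fin (n+1) → ℝ, Fin.init x ∈ D → x (Fin.last n) = a → ∀ t ∈ Ioo 0 T,
      G (x, t) ≤ w a ∨ ∃ d > w₁ a,
        HasDerivWithinAt (fun s => G (Function.update x (Fin.last n) s, t)) d (Icc a b) a)
    (hright : ∀ x : Fin (n+1) → ℝ, Fin.init x ∈ D → x (Fin.last n) = b → ∀ t ∈ Ioo 0 T,
      G (x, t) ≤ w b ∨ ∃ d < w₁ b,
        HasDerivWithinAt (fun s => G (Function.update x (Fin.last n) s, t)) d (Icc a b) b) :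
    ∀ x ∈ closure (cylinder D a b), ∀ t ∈ Icc 0 T, G (x, t) ≤ w (x (Fin.last n)) := by
  have hO := (isOpen_cylinder hDo a b).prod (isOpen_Ioo (a := (0:ℝ)) (b := T))
  have hlast : ContDiff ℝ ∞ (fun q : (Fin (n+1) → ℝ) × ℝ => w (q.1 (Fin.last n))) :=
    hw.smooth.comp (by fun_prop)
  have hwn : ∀ x ∈ closure (cylinder D a b), 0 ≤ w (x (Fin.last n)) := fun x hx =>
    hw.nonneg _ ((mem_closure_cylinder hab).1 hx).2
  have key := le_zero_of_spaceTimeOp_neg (A := A) (B := B) (C := C) (T := T) hA.symm hA.nonneg hC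
    hDo hDb hab (Z := fun q => G q - w (q.1 (Fin.last n)))
    (hG.cont.sub hlast.continuous.continuousOn) (hG.smooth.sub hlast.contDiffOn) ?_ ?_ ?_ ?_ ?_
  · intro x hx t ht
    exact sub_nonpos.1 (key x hx t ht)
  · intro q hq
    rw [spaceTimeOp_sub hO hG.smooth hlast.contDiffOn hq, hG.pde q hq,
      spaceTimeOp_comp_last hw.hasDerivAt hw.hasDerivAt']
    have := hw.super q.2 hq.2 _ hq.1.2
    linarith
  · intro x hx
    simpa [hG.initial x hx] using hwn x hx
  · intro x hx hxD t ht
    simpa [hG.lateral x hx hxD t ht] using hwn x hx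
  · intro x hxD hxa t ht
    rcases hleft x hxD hxa t ht with h | ⟨d, hd, h⟩
    · left; simpa [hxa] using h
    · right
      refine ⟨d - w₁ a, sub_pos.2 hd, ?_⟩
      simpa using h.fun_sub (hw.hasDerivAt a).hasDerivWithinAt
  · intro x hxD hxb t ht
    rcases hright x hxD hxb t ht with h | ⟨d, hd, h⟩
    · left; simpa [hxb] using h
    · right
      refine ⟨d - w₁ b, sub_neg.2 hd, ?_⟩
      simpa using h.fun_sub (hw.hasDerivAt b).hasDerivWithinAt

theorem HomogeneousSolution.abs_le_barrier (hA : DegenerateElliptic A T)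
    (hC : ∀ t ∈ Ioo 0 T, 0 ≤ C t) (hDo : IsOpen D) (hDb : Bornology.IsBounded D) (hab : a < b)
    (hG : HomogeneousSolution A B C T D a b G) (hw : Barrier A B C T a b w w₁ w₂)
    (hleft : ∀ x : Fin (n+1) → ℝ, Fin.init x ∈ D → x (Fin.last n) = a → ∀ t ∈ Ioo 0 T,
      |G (x, t)| ≤ w a ∨ ∃ d, |d| < - w₁ a ∧
        HasDerivWithinAt (fun s => G (Function.update x (Fin.last n) s, t)) d (Icc a b) a)
    (hright : ∀ x : Fin (n+1) → ℝ, Fin.init x ∈ D → x (Fin.last n) = b → ∀ t ∈ Ioo 0 T,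
      |G (x, t)| ≤ w b ∨ ∃ d, |d| < w₁ b ∧
        HasDerivWithinAt (fun s => G (Function.update x (Fin.last n) s, t)) d (Icc a b) b) :
    ∀ x ∈ closure (cylinder D a b), ∀ t ∈ Icc 0 T, |G (x, t)| ≤ w (x (Fin.last n)) := by
  intro x hx t ht
  refine abs_le'.2 ⟨?_, ?_⟩
  · refine hG.le_barrier hA hC hDo hDb hab hw (fun y hy hya s hs => ?_) (fun y hy hyb s hs => ?_)
      x hx t ht
    · rcases hleft y hy hya s hs with h | ⟨d, hd, h⟩
      · exact Or.inl ((le_abs_self _).trans h)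
      · exact Or.inr ⟨d, by linarith [(abs_lt.1 hd).1], h⟩
    · rcases hright y hy hyb s hs with h | ⟨d, hd, h⟩
      · exact Or.inl ((le_abs_self _).trans h)
      · exact Or.inr ⟨d, (abs_lt.1 hd).2, h⟩
  · refine hG.neg.le_barrier hA hC hDo hDb hab hw (fun y hy hya s hs => ?_)
      (fun y hy hyb s hs => ?_) x hx t ht
    · rcases hleft y hy hya s hs with h | ⟨d, hd, h⟩
      · exact Or.inl ((neg_le_abs _).trans h)
      · exact Or.inr ⟨-d, by linarith [(abs_lt.1 hd).2], h.neg⟩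
    · rcases hright y hy hyb s hs with h | ⟨d, hd, h⟩
      · exact Or.inl ((neg_le_abs _).trans h)
      · exact Or.inr ⟨-d, by linarith [(abs_lt.1 hd).1], h.neg⟩

theorem HasLastDeriv.abs_le_left (hab : a < b) (hV : HasLastDeriv T D a b F V)
    (hw : HasDerivAt w (w₁ a) a) (hwa : w a = 0) {x : Fin (n+1) → ℝ}
    (hx : x ∈ closure (cylinder D a b)) (hxa : x (Fin.last n) = a) {t : ℝ} (ht : t ∈ Icc 0 T)
    (hF : ∀ y ∈ closure (cylinder D a b), |F (y, t)| ≤ w (y (Fin.last n))) :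
    |V (x, t)| ≤ w₁ a := by
  have hF0 : F (x, t) = 0 := by simpa [hxa, hwa] using hF x hx
  have hup : Function.update x (Fin.last n) a = x := by rw [← hxa]; simp
  have hd := hV x hx t ht
  rw [hxa] at hd
  have hFs : ∀ s ∈ Icc a b, |F (Function.update x (Fin.last n) s, t)| ≤ w s := fun s hs => by
    simpa using hF _ (update_last_mem_closure_cylinder hab hx hs)
  refine abs_le'.2 ⟨?_, ?_⟩
  · have := nonpos_of_hasDerivWithinAt_left_of_max hab (hd.sub hw.hasDerivWithinAt)
      (fun s hs => by
        simpa [hup, hF0, hwa] using (le_abs_self _).trans (hFs s hs))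
    linarith
  · have := nonpos_of_hasDerivWithinAt_left_of_max hab (hd.neg.sub hw.hasDerivWithinAt)
      (fun s hs => by
        have := (neg_le_abs _).trans (hFs s hs)
        simp [hup, hF0, hwa]; linarith)
    linarith

theorem HasLastDeriv.abs_le_right (hab : a < b) (hV : HasLastDeriv T D a b F V)
    (hw : HasDerivAt w (w₁ b) b) (hwb : w b = 0) {x : Fin (n+1) → ℝ}
    (hx : x ∈ closure (cylinder D a b)) (hxb : x (Fin.last n) = b) {t : ℝ} (ht : t ∈ Icc 0 T)
    (hF : ∀ y ∈ closure (cylinder D a b), |F (y, t)| ≤ w (y (Fin.last n))) :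
    |V (x, t)| ≤ - w₁ b := by
  have hF0 : F (x, t) = 0 := by simpa [hxb, hwb] using hF x hx
  have hup : Function.update x (Fin.last n) b = x := by rw [← hxb]; simp
  have hd := hV x hx t ht
  rw [hxb] at hd
  have hFs : ∀ s ∈ Icc a b, |F (Function.update x (Fin.last n) s, t)| ≤ w s := fun s hs => by
    simpa using hF _ (update_last_mem_closure_cylinder hab hx hs)
  refine abs_le'.2 ⟨?_, ?_⟩
  · have := nonneg_of_hasDerivWithinAt_right_of_max hab (hd.neg.sub hw.hasDerivWithinAt)
      (fun s hs => by
        have := (neg_le_abs _).trans (hFs s hs)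
        simp [hup, hF0, hwb]; linarith)
    linarith
  · have := nonneg_of_hasDerivWithinAt_right_of_max hab (hd.sub hw.hasDerivWithinAt)
      (fun s hs => by
        simpa [hup, hF0, hwb] using (le_abs_self _).trans (hFs s hs))
    linarith

theorem mem_closure_of_init_mem (hab : a < b) {x : Fin (n+1) → ℝ}
    (hx : Fin.init x ∈ D) (hl : x (Fin.last n) ∈ Icc a b) : x ∈ closure (cylinder D a b) :=
  (mem_closure_cylinder hab).2 ⟨subset_closure hx, hl⟩

theorem HasLastDeriv.eq_fderiv (hDo : IsOpen D) (hV : HasLastDeriv T D a b F V)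
    (hF : ContDiffOn ℝ ∞ F (cylinder D a b ×ˢ Ioo 0 T))
    {q : (Fin (n+1) → ℝ) × ℝ} (hq : q ∈ cylinder D a b ×ˢ Ioo 0 T) :
    V q = fderiv ℝ F q (spaceDir (Fin.last n)) := by
  have hO := (isOpen_cylinder hDo a b).prod (isOpen_Ioo (a := (0:ℝ)) (b := T))
  have h1 := (hV q.1 (subset_closure hq.1) q.2 (Ioo_subset_Icc_self hq.2)).hasDerivAt
    (Icc_mem_nhds hq.1.2.1 hq.1.2.2)
  have hdiff : DifferentiableAt ℝ F
      (Function.update q.1 (Fin.last n) (q.1 (Fin.last n)), q.2) := by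
    simpa using hF.differentiableAt_of_isOpen hO hq
  have h2 := hdiff.hasFDerivAt.comp_hasDerivAt (q.1 (Fin.last n))
    ((hasDerivAt_update q.1 (Fin.last n) (q.1 (Fin.last n))).prodMk
      (hasDerivAt_const (q.1 (Fin.last n)) q.2))
  have h3 := h1.unique h2
  simpa [spaceDir] using h3

theorem HomogeneousSolution.lastDeriv (hDo : IsOpen D)
    (hab : a < b) (hT : 0 < T) (hF : HomogeneousSolution A B C T D a b F)
    (hV : HasLastDeriv T D a b F V)
    (hVc : ContinuousOn V (closure (cylinder D a b) ×ˢ Icc 0 T)) :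
    HomogeneousSolution A B C T D a b V := by
  have hO := (isOpen_cylinder hDo a b).prod (isOpen_Ioo (a := (0:ℝ)) (b := T))
  have hVF : ∀ q ∈ cylinder D a b ×ˢ Ioo 0 T, V q = fderiv ℝ F q (spaceDir (Fin.last n)) :=
    fun q hq => hV.eq_fderiv hDo hF.smooth hq
  have hzero : ∀ x ∈ closure (cylinder D a b), ∀ t ∈ Icc 0 T,
      (∀ s ∈ Icc a b, F (Function.update x (Fin.last n) s, t) = 0) → V (x, t) = 0 := by
    intro x hx t ht h
    have hxl := ((mem_closure_cylinder hab).1 hx).2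
    have h1 := (hV x hx t ht).congr (f₁ := fun _ => 0) (fun s hs => (h s hs).symm)
      (h _ hxl).symm
    exact (uniqueDiffOn_Icc hab _ hxl).eq_deriv _ h1 (hasDerivWithinAt_const _ _ _)
  refine ⟨hVc, (hF.smooth.fderiv_apply_const hO _).congr hVF, fun q hq => ?_, fun x hx => ?_,
    fun x hx hxD t ht => ?_⟩
  · have := spaceTimeOp_fderiv_spaceDir hO hF.smooth hF.pde (Fin.last n) hq
    rw [← this]
    simp only [spaceTimeOp]
    have hcon : ∀ r ∈ cylinder D a b ×ˢ Ioo 0 T, fderiv ℝ V r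
        = fderiv ℝ (fun r => fderiv ℝ F r (spaceDir (Fin.last n))) r :=
      fun r hr => fderiv_congr_on_isOpen hO hVF hr
    have hcon2 : ∀ j, fderiv ℝ (fun r => fderiv ℝ V r (spaceDir j)) q
        = fderiv ℝ (fun r => fderiv ℝ (fun r => fderiv ℝ F r (spaceDir (Fin.last n))) r
          (spaceDir j)) q :=
      fun j => fderiv_congr_on_isOpen hO (fun r hr => by rw [hcon r hr]) hq
    simp only [hcon q hq, hcon2, hVF q hq]
  · exact hzero x hx 0 ⟨le_rfl, hT.le⟩ fun s hs =>
      hF.initial _ (update_last_mem_closure_cylinder hab hx hs)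
  · exact hzero x hx t (Ioo_subset_Icc_self ht) fun s hs =>
      hF.lateral _ (update_last_mem_closure_cylinder hab hx hs) (by simpa using hxD) t ht

/-- A Neumann bound at the right face and a Dirichlet condition at the left face bound the
normal derivative at the left face. -/
theorem HomogeneousSolution.abs_lastDeriv_le_left (hA : DegenerateElliptic A T)
    (hC : ∀ t ∈ Ioo 0 T, 0 ≤ C t) (hDo : IsOpen D) (hDb : Bornology.IsBounded D) (hab : a < b)
    {K : ℝ} (hK : 0 < K)
    (hAB : ∀ t ∈ Ioo 0 T, |B (Fin.last n) t| < K * A (Fin.last n) (Fin.last n) t)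
    (hF : HomogeneousSolution A B C T D a b F) (hV : HasLastDeriv T D a b F V)
    {m : ℝ} (hm : 0 < m)
    (hleft : ∀ x : Fin (n+1) → ℝ, Fin.init x ∈ D → x (Fin.last n) = a → ∀ t ∈ Ioo 0 T,
      F (x, t) = 0)
    (hright : ∀ x : Fin (n+1) → ℝ, Fin.init x ∈ D → x (Fin.last n) = b → ∀ t ∈ Ioo 0 T,
      |V (x, t)| ≤ m) :
    ∀ x : Fin (n+1) → ℝ, Fin.init x ∈ D → x (Fin.last n) = a → ∀ t ∈ Ioo 0 T,
      |V (x, t)| ≤ m * (2 * Real.exp (K * (b - a))) := by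
  set E := Real.exp (K * (b - a)) with hE
  have hEpos : 0 < E := Real.exp_pos _
  have hexp : ∀ s, HasDerivAt (fun s => Real.exp (-(K * (s - a))))
      (-(K * Real.exp (-(K * (s - a))))) s := by
    intro s
    have h : HasDerivAt (fun s => -(K * (s - a))) (-(K * 1)) s :=
      (((hasDerivAt_id s).sub_const a).const_mul K).fun_neg
    exact h.exp.congr_deriv (by ring)
  have hw : Barrier A B C T a b (fun s => 2 / K * E * (1 - Real.exp (-(K * (s - a)))))
      (fun s => 2 * E * Real.exp (-(K * (s - a))))
      (fun s => -(K * (2 * E * Real.exp (-(K * (s - a)))))) := by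
    refine ⟨?_, fun s => ?_, fun s => ?_, fun s hs => ?_, fun t ht s hs => ?_⟩
    · fun_prop
    · exact (((hexp s).const_sub 1).const_mul (2 / K * E)).congr_deriv (by field_simp)
    · exact ((hexp s).const_mul (2 * E)).congr_deriv (by ring)
    · have : Real.exp (-(K * (s - a))) ≤ 1 := by
        rw [Real.exp_le_one_iff]
        have := mul_nonneg hK.le (sub_nonneg.2 hs.1)
        linarith
      have h2 := sub_nonneg.2 this
      positivity
    · have h1 : Real.exp (-(K * (s - a))) ≤ 1 := by
        rw [Real.exp_le_one_iff]
        have := mul_nonneg hK.le (sub_nonneg.2 hs.1.le)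
        linarith
      have h2 := sub_nonneg.2 h1
      have h3 : 0 ≤ C t * (2 / K * E * (1 - Real.exp (-(K * (s - a))))) :=
        mul_nonneg (hC t ht) (by positivity)
      have h4 : 0 < (K * A (Fin.last n) (Fin.last n) t + B (Fin.last n) t)
          * (2 * E * Real.exp (-(K * (s - a)))) :=
        mul_pos (by linarith [(abs_lt.1 (hAB t ht)).1]) (by positivity)
      linarith
  have hb : E * Real.exp (-(K * (b - a))) = 1 := by rw [hE, ← Real.exp_add]; simp
  have hw' := hw.const_mul hm
  have hbound := hF.abs_le_barrier hA hC hDo hDb hab hw'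
    (fun x hx hxa t ht => Or.inl (by simp [hleft x hx hxa t ht]))
    (fun x hx hxb t ht => Or.inr ⟨V (x, t), ?_, ?_⟩)
  · intro x hx hxa t ht
    have := hV.abs_le_left hab
      (w := fun s => m * (2 / K * E * (1 - Real.exp (-(K * (s - a))))))
      (w₁ := fun s => m * (2 * E * Real.exp (-(K * (s - a))))) (hw'.hasDerivAt a) (by simp)
      (mem_closure_of_init_mem hab hx (by rw [hxa]; exact ⟨le_rfl, hab.le⟩)) hxa
      (Ioo_subset_Icc_self ht) (fun y hy => hbound y hy t (Ioo_subset_Icc_self ht))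
    simpa using this
  · refine (hright x hx hxb t ht).trans_lt ?_
    rw [mul_assoc, hb]
    linarith
  · have := hV x (mem_closure_of_init_mem hab hx (by rw [hxb]; exact ⟨hab.le, le_rfl⟩)) t
      (Ioo_subset_Icc_self ht)
    rwa [hxb] at this

/-- A Neumann bound at the left face and a Dirichlet condition at the right face bound the
normal derivative at the right face. -/
theorem HomogeneousSolution.abs_lastDeriv_le_right (hA : DegenerateElliptic A T)
    (hC : ∀ t ∈ Ioo 0 T, 0 ≤ C t) (hDo : IsOpen D) (hDb : Bornology.IsBounded D) (hab : a < b)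
    {K : ℝ} (hK : 0 < K)
    (hAB : ∀ t ∈ Ioo 0 T, |B (Fin.last n) t| < K * A (Fin.last n) (Fin.last n) t)
    (hF : HomogeneousSolution A B C T D a b F) (hV : HasLastDeriv T D a b F V)
    {m : ℝ} (hm : 0 < m)
    (hleft : ∀ x : Fin (n+1) → ℝ, Fin.init x ∈ D → x (Fin.last n) = a → ∀ t ∈ Ioo 0 T,
      |V (x, t)| ≤ m)
    (hright : ∀ x : Fin (n+1) → ℝ, Fin.init x ∈ D → x (Fin.last n) = b → ∀ t ∈ Ioo 0 T,
      F (x, t) = 0) :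
    ∀ x : Fin (n+1) → ℝ, Fin.init x ∈ D → x (Fin.last n) = b → ∀ t ∈ Ioo 0 T,
      |V (x, t)| ≤ m * (2 * Real.exp (K * (b - a))) := by
  set E := Real.exp (K * (b - a)) with hE
  have hEpos : 0 < E := Real.exp_pos _
  have hexp : ∀ s, HasDerivAt (fun s => Real.exp (-(K * (b - s))))
      (K * Real.exp (-(K * (b - s)))) s := by
    intro s
    have h : HasDerivAt (fun s => -(K * (b - s))) (-(K * (-1))) s :=
      (((hasDerivAt_id s).const_sub b).const_mul K).fun_neg
    exact h.exp.congr_deriv (by ring)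
  have hw : Barrier A B C T a b (fun s => 2 / K * E * (1 - Real.exp (-(K * (b - s)))))
      (fun s => -(2 * E * Real.exp (-(K * (b - s)))))
      (fun s => -(K * (2 * E * Real.exp (-(K * (b - s)))))) := by
    refine ⟨?_, fun s => ?_, fun s => ?_, fun s hs => ?_, fun t ht s hs => ?_⟩
    · fun_prop
    · exact (((hexp s).const_sub 1).const_mul (2 / K * E)).congr_deriv (by field_simp)
    · exact ((hexp s).const_mul (2 * E)).fun_neg.congr_deriv (by ring)
    · have : Real.exp (-(K * (b - s))) ≤ 1 := by
        rw [Real.exp_le_one_iff]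
        have := mul_nonneg hK.le (sub_nonneg.2 hs.2)
        linarith
      have h2 := sub_nonneg.2 this
      positivity
    · have h1 : Real.exp (-(K * (b - s))) ≤ 1 := by
        rw [Real.exp_le_one_iff]
        have := mul_nonneg hK.le (sub_nonneg.2 hs.2.le)
        linarith
      have h2 := sub_nonneg.2 h1
      have h3 : 0 ≤ C t * (2 / K * E * (1 - Real.exp (-(K * (b - s))))) :=
        mul_nonneg (hC t ht) (by positivity)
      have h4 : 0 < (K * A (Fin.last n) (Fin.last n) t - B (Fin.last n) t)
          * (2 * E * Real.exp (-(K * (b - s)))) :=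
        mul_pos (by linarith [(abs_lt.1 (hAB t ht)).2]) (by positivity)
      linarith
  have hb : E * Real.exp (-(K * (b - a))) = 1 := by rw [hE, ← Real.exp_add]; simp
  have hw' := hw.const_mul hm
  have hbound := hF.abs_le_barrier hA hC hDo hDb hab hw'
    (fun x hx hxa t ht => Or.inr ⟨V (x, t), ?_, ?_⟩)
    (fun x hx hxb t ht => Or.inl (by simp [hright x hx hxb t ht]))
  · intro x hx hxb t ht
    have := hV.abs_le_right hab
      (w := fun s => m * (2 / K * E * (1 - Real.exp (-(K * (b - s))))))
      (w₁ := fun s => m * -(2 * E * Real.exp (-(K * (b - s))))) (hw'.hasDerivAt b) (by simp)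
      (mem_closure_of_init_mem hab hx (by rw [hxb]; exact ⟨hab.le, le_rfl⟩)) hxb
      (Ioo_subset_Icc_self ht) (fun y hy => hbound y hy t (Ioo_subset_Icc_self ht))
    simpa using this
  · refine (hleft x hx hxa t ht).trans_lt ?_
    rw [mul_assoc, hb]
    linarith
  · have := hV x (mem_closure_of_init_mem hab hx (by rw [hxa]; exact ⟨le_rfl, hab.le⟩)) t
      (Ioo_subset_Icc_self ht)
    rwa [hxa] at this

end Comparison

section Regularity

variable {n : ℕ}

/-- The derivative in the last space variable, taken within `S`. -/
noncomputable def lastDerivWithin (S : Set (Fin (n+1) → ℝ)) (H : (Fin (n+1) → ℝ) × ℝ → ℝ)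
    (q : (Fin (n+1) → ℝ) × ℝ) : ℝ :=
  fderivWithin ℝ (fun y => H (y, q.2)) S q.1 (Pi.single (Fin.last n) 1)

variable {T : ℝ} {D : Set (Fin n → ℝ)} {a b : ℝ} {H : (Fin (n+1) → ℝ) × ℝ → ℝ}

theorem hasLastDeriv_lastDerivWithin (hab : a < b)
    (hH : ContDiffOn ℝ ∞ H (closure (cylinder D a b) ×ˢ Icc 0 T)) :
    HasLastDeriv T D a b H (lastDerivWithin (closure (cylinder D a b)) H) := by
  intro x hx t ht
  have hd : DifferentiableWithinAt ℝ (fun y => H (y, t)) (closure (cylinder D a b)) x :=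
    (hH.differentiableOn (by simp) (x, t) ⟨hx, ht⟩).comp x
      (f := fun y => (y, t)) (by fun_prop) (fun y hy => ⟨hy, ht⟩)
  exact hd.hasFDerivWithinAt.comp_hasDerivWithinAt_of_eq (x (Fin.last n))
    (hasDerivAt_update x (Fin.last n) (x (Fin.last n))).hasDerivWithinAt
    (fun s hs => update_last_mem_closure_cylinder hab hx hs) (by simp)

theorem HasLastDeriv.unique {V W : (Fin (n+1) → ℝ) × ℝ → ℝ} (hab : a < b)
    {x : Fin (n+1) → ℝ} (hx : x ∈ closure (cylinder D a b)) {t : ℝ} (ht : t ∈ Icc 0 T)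
    (hV : HasLastDeriv T D a b H V) (hW : HasLastDeriv T D a b H W) : V (x, t) = W (x, t) :=
  (uniqueDiffOn_Icc hab _ ((mem_closure_cylinder hab).1 hx).2).eq_deriv _ (hV x hx t ht)
    (hW x hx t ht)

theorem HasLastDeriv.mono {V : (Fin (n+1) → ℝ) × ℝ → ℝ} {a' b' : ℝ} (hab : a < b) (hab' : a' < b')
    (ha : a ≤ a') (hb : b' ≤ b) (hV : HasLastDeriv T D a b H V) :
    HasLastDeriv T D a' b' H V := by
  intro x hx t ht
  rw [mem_closure_cylinder hab'] at hx
  exact (hV x ((mem_closure_cylinder hab).2 ⟨hx.1, Icc_subset_Icc ha hb hx.2⟩) t ht).mono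
    (Icc_subset_Icc ha hb)

theorem continuousOn_lastDerivWithin (hab : a < b)
    (hH : ContDiffOn ℝ ∞ H (closure (cylinder D a b) ×ˢ Icc 0 T)) :
    ContinuousOn (lastDerivWithin (closure (cylinder D a b)) H)
      (closure (cylinder D a b) ×ˢ Icc 0 T) := by
  intro q hq
  have h1 : ContDiffWithinAt ℝ (0 + 1) H (closure (cylinder D a b) ×ˢ Icc 0 T) q :=
    (hH q hq).of_le (by simp)
  obtain ⟨u, hu, hus, -, f', hf', hc⟩ :=
    (contDiffWithinAt_succ_iff_hasFDerivWithinAt' (by simp)).1 h1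
  rw [insert_eq_of_mem hq] at hu hus
  have heq : ∀ r ∈ u, lastDerivWithin (closure (cylinder D a b)) H r
      = f' r (spaceDir (Fin.last n)) := by
    intro r hr
    have hrs := hus hr
    have hline : HasDerivWithinAt (fun s => (Function.update r.1 (Fin.last n) s, r.2))
        (spaceDir (Fin.last n)) (Icc a b) (r.1 (Fin.last n)) :=
      ((hasDerivAt_update r.1 (Fin.last n) (r.1 (Fin.last n))).prodMk
        (hasDerivAt_const (r.1 (Fin.last n)) r.2)).hasDerivWithinAt
    have h2 := (hf' r hr).comp_hasDerivWithinAt_of_eq (r.1 (Fin.last n)) hline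
      (fun s hs => ⟨update_last_mem_closure_cylinder hab hrs.1 hs, hrs.2⟩) (by simp)
    exact (uniqueDiffOn_Icc hab _ ((mem_closure_cylinder hab).1 hrs.1).2).eq_deriv _
      (hasLastDeriv_lastDerivWithin hab hH r.1 hrs.1 r.2 hrs.2) h2
  have hcont : ContinuousWithinAt (fun r => f' r (spaceDir (Fin.last n)))
      (closure (cylinder D a b) ×ˢ Icc 0 T) q :=
    hc.continuousWithinAt.clm_apply continuousWithinAt_const
  exact hcont.congr_of_eventuallyEq (by filter_upwards [hu] with r hr using heq r hr)
    (heq q (mem_of_mem_nhdsWithin hq hu))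

theorem HasLastDeriv.sub {F G V W : (Fin (n+1) → ℝ) × ℝ → ℝ} (hF : HasLastDeriv T D a b F V)
    (hG : HasLastDeriv T D a b G W) :
    HasLastDeriv T D a b (fun q => F q - G q) (fun q => V q - W q) :=
  fun x hx t ht => (hF x hx t ht).fun_sub (hG x hx t ht)

theorem HasLastDeriv.exp_mul {F V : (Fin (n+1) → ℝ) × ℝ → ℝ} (hF : HasLastDeriv T D a b F V)
    (L : (Fin (n+1) → ℝ) × ℝ →L[ℝ] ℝ) :
    HasLastDeriv T D a b (fun q => Real.exp (L q) * F q)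
      (fun q => Real.exp (L q) * (V q + L (spaceDir (Fin.last n)) * F q)) := by
  intro x hx t ht
  have hline : HasDerivWithinAt (fun s => (Function.update x (Fin.last n) s, t))
      (spaceDir (Fin.last n)) (Icc a b) (x (Fin.last n)) :=
    ((hasDerivAt_update x (Fin.last n) (x (Fin.last n))).prodMk
      (hasDerivAt_const (x (Fin.last n)) t)).hasDerivWithinAt
  have h := ((L.hasFDerivAt.comp_hasDerivWithinAt (x (Fin.last n)) hline).exp).mul (hF x hx t ht)
  refine h.congr_deriv ?_
  simp
  ring

end Regularity

section Iteration

variable {n : ℕ}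

/-- Barriers on overlapping intervals `(aa l, bb l)`, `1 ≤ l ≤ I`, normalised at the interior
endpoints, bounded by `θ` at the endpoints of the neighbours, and large at the two extreme ends. -/
structure BarrierFamily (A : Fin (n+1) → Fin (n+1) → ℝ → ℝ) (B : Fin (n+1) → ℝ → ℝ) (C : ℝ → ℝ)
    (T K θ : ℝ) (I : ℕ) (aa bb : ℕ → ℝ) (w w₁ w₂ : ℕ → ℝ → ℝ) : Prop where
  barrier : ∀ l, 1 ≤ l → l ≤ I → Barrier A B C T (aa l) (bb l) (w l) (w₁ l) (w₂ l)
  left_eq : ∀ l, 1 ≤ l → l + 1 ≤ I → w (l + 1) (aa (l + 1)) = 1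
  left_deriv : ∀ l, 1 ≤ l → l + 1 ≤ I → 1 < - w₁ (l + 1) (aa (l + 1))
  left_neighbour : ∀ l, 1 ≤ l → l + 1 ≤ I → w l (aa (l + 1)) ≤ θ
  right_eq : ∀ l, 1 ≤ l → l + 1 ≤ I → w l (bb l) = 1
  right_deriv : ∀ l, 1 ≤ l → l + 1 ≤ I → 1 < w₁ l (bb l)
  right_neighbour : ∀ l, 1 ≤ l → l + 1 ≤ I → w (l + 1) (bb l) ≤ θ
  left_end : 2 * Real.exp (K * (bb 1 - aa 1)) ≤ w 1 (aa 1)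
  right_end : 2 * Real.exp (K * (bb I - aa I)) ≤ w I (bb I)

theorem lt_of_overlap {I : ℕ} (hI : 2 ≤ I) {aa bb : ℕ → ℝ}
    (horder : ∀ l, 1 ≤ l → l + 1 ≤ I →
      aa l < aa (l + 1) ∧ aa (l + 1) < bb l ∧ bb l < bb (l + 1)) {l : ℕ} (h1 : 1 ≤ l)
    (h2 : l ≤ I) : aa l < bb l := by
  rcases Nat.lt_or_ge l I with h | h
  · have := horder l h1 h
    linarith
  · obtain ⟨j, rfl⟩ : ∃ j, l = j + 1 := ⟨l - 1, by omega⟩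
    have := horder j (by omega) h2
    linarith

variable {A : Fin (n+1) → Fin (n+1) → ℝ → ℝ} {B : Fin (n+1) → ℝ → ℝ} {C : ℝ → ℝ} {T K θ : ℝ}
  {D : Set (Fin n → ℝ)} {I : ℕ} {aa bb : ℕ → ℝ} {w w₁ w₂ : ℕ → ℝ → ℝ}
  {F V V' : ℕ → (Fin (n+1) → ℝ) × ℝ → ℝ}

theorem BarrierFamily.abs_lastDeriv_le (hA : DegenerateElliptic A T)
    (hC : ∀ t ∈ Ioo 0 T, 0 ≤ C t) (hDo : IsOpen D) (hDb : Bornology.IsBounded D) (hT : 0 < T)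
    (hK : 0 < K) (hAB : ∀ t ∈ Ioo 0 T, |B (Fin.last n) t| < K * A (Fin.last n) (Fin.last n) t)
    (hI : 2 ≤ I)
    (horder : ∀ l, 1 ≤ l → l + 1 ≤ I →
      aa l < aa (l + 1) ∧ aa (l + 1) < bb l ∧ bb l < bb (l + 1))
    (hθ : 0 < θ) (hw : BarrierFamily A B C T K θ I aa bb w w₁ w₂)
    (hF : ∀ l, 1 ≤ l → l ≤ I → HomogeneousSolution A B C T D (aa l) (bb l) (F l))
    (hV : ∀ l, 1 ≤ l → l ≤ I → HasLastDeriv T D (aa l) (bb l) (F l) (V l))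
    (hVc : ∀ l, 1 ≤ l → l ≤ I →
      ContinuousOn (V l) (closure (cylinder D (aa l) (bb l)) ×ˢ Icc 0 T))
    (hleft : ∀ l, 1 ≤ l → l + 1 ≤ I → ∀ x : Fin (n+1) → ℝ, Fin.init x ∈ D →
      x (Fin.last n) = aa (l + 1) → ∀ t ∈ Ioo 0 T, V (l + 1) (x, t) = V' l (x, t))
    (hright : ∀ l, 1 ≤ l → l + 1 ≤ I → ∀ x : Fin (n+1) → ℝ, Fin.init x ∈ D →
      x (Fin.last n) = bb l → ∀ t ∈ Ioo 0 T, V l (x, t) = V' (l + 1) (x, t))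
    (hleft_end : ∀ x : Fin (n+1) → ℝ, Fin.init x ∈ D → x (Fin.last n) = aa 1 → ∀ t ∈ Ioo 0 T,
      F 1 (x, t) = 0)
    (hright_end : ∀ x : Fin (n+1) → ℝ, Fin.init x ∈ D → x (Fin.last n) = bb I → ∀ t ∈ Ioo 0 T,
      F I (x, t) = 0)
    {m : ℝ} (hm : 0 < m)
    (hV' : ∀ l, 1 ≤ l → l ≤ I → ∀ x ∈ closure (cylinder D (aa l) (bb l)), ∀ t ∈ Icc 0 T,
      |V' l (x, t)| ≤ m * w l (x (Fin.last n))) :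
    ∀ l, 1 ≤ l → l ≤ I → ∀ x ∈ closure (cylinder D (aa l) (bb l)), ∀ t ∈ Icc 0 T,
      |V l (x, t)| ≤ θ * m * w l (x (Fin.last n)) := by
  have hab : ∀ l, 1 ≤ l → l ≤ I → aa l < bb l := fun l => lt_of_overlap hI horder
  have hm' : 0 < θ * m := mul_pos hθ hm
  have hL : ∀ l, 1 ≤ l → l + 1 ≤ I → ∀ x : Fin (n+1) → ℝ, Fin.init x ∈ D →
      x (Fin.last n) = aa (l + 1) → ∀ t ∈ Ioo 0 T, |V (l + 1) (x, t)| ≤ θ * m := by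
    intro l h1 h2 x hx hxl t ht
    have ho := horder l h1 h2
    rw [hleft l h1 h2 x hx hxl t ht]
    have := hV' l h1 (by omega) x (mem_closure_of_init_mem (hab l h1 (by omega)) hx
      (by rw [hxl]; exact ⟨ho.1.le, ho.2.1.le⟩)) t (Ioo_subset_Icc_self ht)
    rw [hxl] at this
    nlinarith [hw.left_neighbour l h1 h2]
  have hR : ∀ l, 1 ≤ l → l + 1 ≤ I → ∀ x : Fin (n+1) → ℝ, Fin.init x ∈ D →
      x (Fin.last n) = bb l → ∀ t ∈ Ioo 0 T, |V l (x, t)| ≤ θ * m := by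
    intro l h1 h2 x hx hxl t ht
    have ho := horder l h1 h2
    rw [hright l h1 h2 x hx hxl t ht]
    have := hV' (l + 1) (by omega) h2 x (mem_closure_of_init_mem (hab (l + 1) (by omega) h2) hx
      (by rw [hxl]; exact ⟨ho.2.1.le, ho.2.2.le⟩)) t (Ioo_subset_Icc_self ht)
    rw [hxl] at this
    nlinarith [hw.right_neighbour l h1 h2]
  intro l h1 h2
  refine ((hF l h1 h2).lastDeriv hDo (hab l h1 h2) hT (hV l h1 h2) (hVc l h1 h2)).abs_le_barrier
    hA hC hDo hDb (hab l h1 h2) ((hw.barrier l h1 h2).const_mul hm')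
    (fun x hx hxl t ht => Or.inl ?_) (fun x hx hxl t ht => Or.inl ?_)
  · rcases Nat.lt_or_ge 1 l with h | h
    · obtain ⟨j, rfl⟩ : ∃ j, l = j + 1 := ⟨l - 1, by omega⟩
      simpa [hw.left_eq j (by omega) h2] using hL j (by omega) h2 x hx hxl t ht
    · obtain rfl : l = 1 := le_antisymm h h1
      refine ((hF 1 h1 h2).abs_lastDeriv_le_left hA hC hDo hDb (hab 1 h1 h2) hK hAB (hV 1 h1 h2) hm'
        hleft_end (hR 1 le_rfl (by omega)) x hx hxl t ht).trans ?_
      exact mul_le_mul_of_nonneg_left hw.left_end hm'.le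
  · rcases Nat.lt_or_ge l I with h | h
    · simpa [hw.right_eq l h1 h] using hR l h1 h x hx hxl t ht
    · obtain rfl : l = I := le_antisymm h2 h
      obtain ⟨j, rfl⟩ : ∃ j, l = j + 1 := ⟨l - 1, by omega⟩
      refine ((hF _ h1 h2).abs_lastDeriv_le_right hA hC hDo hDb (hab _ h1 h2) hK hAB (hV _ h1 h2)
        hm' (hL j (by omega) h2) hright_end x hx hxl t ht).trans ?_
      exact mul_le_mul_of_nonneg_left hw.right_end hm'.le

theorem BarrierFamily.abs_le (hA : DegenerateElliptic A T)
    (hC : ∀ t ∈ Ioo 0 T, 0 ≤ C t) (hDo : IsOpen D) (hDb : Bornology.IsBounded D)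
    (hI : 2 ≤ I)
    (horder : ∀ l, 1 ≤ l → l + 1 ≤ I →
      aa l < aa (l + 1) ∧ aa (l + 1) < bb l ∧ bb l < bb (l + 1))
    (hw : BarrierFamily A B C T K θ I aa bb w w₁ w₂)
    (hF : ∀ l, 1 ≤ l → l ≤ I → HomogeneousSolution A B C T D (aa l) (bb l) (F l))
    (hV : ∀ l, 1 ≤ l → l ≤ I → HasLastDeriv T D (aa l) (bb l) (F l) (V l))
    (hleft_end : ∀ x : Fin (n+1) → ℝ, Fin.init x ∈ D → x (Fin.last n) = aa 1 → ∀ t ∈ Ioo 0 T,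
      F 1 (x, t) = 0)
    (hright_end : ∀ x : Fin (n+1) → ℝ, Fin.init x ∈ D → x (Fin.last n) = bb I → ∀ t ∈ Ioo 0 T,
      F I (x, t) = 0)
    {m : ℝ} (hm : 0 < m)
    (hVm : ∀ l, 1 ≤ l → l ≤ I → ∀ x ∈ closure (cylinder D (aa l) (bb l)), ∀ t ∈ Icc 0 T,
      |V l (x, t)| ≤ m * w l (x (Fin.last n))) :
    ∀ l, 1 ≤ l → l ≤ I → ∀ x ∈ closure (cylinder D (aa l) (bb l)), ∀ t ∈ Icc 0 T,
      |F l (x, t)| ≤ m * w l (x (Fin.last n)) := by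
  have hab : ∀ l, 1 ≤ l → l ≤ I → aa l < bb l := fun l => lt_of_overlap hI horder
  intro l h1 h2
  have hl := hab l h1 h2
  have hwm := (hw.barrier l h1 h2).const_mul hm
  refine (hF l h1 h2).abs_le_barrier hA hC hDo hDb hl hwm
    (fun x hx hxl t ht => ?_) (fun x hx hxl t ht => ?_)
  · have hxc : x ∈ closure (cylinder D (aa l) (bb l)) :=
      mem_closure_of_init_mem hl hx (by rw [hxl]; exact ⟨le_rfl, hl.le⟩)
    rcases Nat.lt_or_ge 1 l with h | h
    · obtain ⟨j, rfl⟩ : ∃ j, l = j + 1 := ⟨l - 1, by omega⟩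
      refine Or.inr ⟨V (j + 1) (x, t), ?_, ?_⟩
      · have h3 := hVm _ h1 h2 x hxc t (Ioo_subset_Icc_self ht)
        rw [hxl, hw.left_eq j (by omega) h2] at h3
        nlinarith [hw.left_deriv j (by omega) h2]
      · have := hV _ h1 h2 x hxc t (Ioo_subset_Icc_self ht)
        rwa [hxl] at this
    · obtain rfl : l = 1 := le_antisymm h h1
      left
      rw [hleft_end x hx hxl t ht, abs_zero]
      exact hwm.nonneg _ ⟨le_rfl, hl.le⟩
  · have hxc : x ∈ closure (cylinder D (aa l) (bb l)) :=
      mem_closure_of_init_mem hl hx (by rw [hxl]; exact ⟨hl.le, le_rfl⟩)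
    rcases Nat.lt_or_ge l I with h | h
    · refine Or.inr ⟨V l (x, t), ?_, ?_⟩
      · have h3 := hVm _ h1 h2 x hxc t (Ioo_subset_Icc_self ht)
        rw [hxl, hw.right_eq l h1 h] at h3
        nlinarith [hw.right_deriv l h1 h]
      · have := hV _ h1 h2 x hxc t (Ioo_subset_Icc_self ht)
        rwa [hxl] at this
    · obtain rfl : l = I := le_antisymm h2 h
      left
      rw [hright_end x hx hxl t ht, abs_zero]
      exact hwm.nonneg _ ⟨hl.le, le_rfl⟩

theorem hasDerivAt_exp_quadratic (κ s r x : ℝ) :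
    HasDerivAt (fun x => Real.exp (κ * ((x - s) * (x - r))))
      (κ * (2 * x - s - r) * Real.exp (κ * ((x - s) * (x - r)))) x := by
  have h : HasDerivAt (fun x => κ * ((x - s) * (x - r))) (κ * (1 * (x - r) + (x - s) * 1)) x :=
    ((((hasDerivAt_id x).sub_const s).mul ((hasDerivAt_id x).sub_const r))).const_mul κ
  exact h.exp.congr_deriv (by ring)

theorem hasDerivAt_deriv_exp_quadratic (κ s r x : ℝ) :
    HasDerivAt (fun x => κ * (2 * x - s - r) * Real.exp (κ * ((x - s) * (x - r))))
      ((κ ^ 2 * (2 * x - s - r) ^ 2 + 2 * κ) * Real.exp (κ * ((x - s) * (x - r)))) x := by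
  have h : HasDerivAt (fun x => κ * (2 * x - s - r)) (κ * (2 * 1)) x :=
    (((((hasDerivAt_id x).const_mul 2).sub_const s).sub_const r)).const_mul κ
  exact (h.mul (hasDerivAt_exp_quadratic κ s r x)).congr_deriv (by ring)

theorem eventually_barrier_exp_quadratic {MA MB MC : ℝ}
    (hMA : ∀ t ∈ Ioo 0 T, |A (Fin.last n) (Fin.last n) t| ≤ MA)
    (hMB : ∀ t ∈ Ioo 0 T, |B (Fin.last n) t| ≤ MB) (hMC : ∀ t ∈ Ioo 0 T, |C t| ≤ MC)
    (κ a b s r : ℝ) :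
    ∀ᶠ Λ in atTop, Barrier A B (fun t => C t + Λ) T a b
      (fun x => Real.exp (κ * ((x - s) * (x - r))))
      (fun x => κ * (2 * x - s - r) * Real.exp (κ * ((x - s) * (x - r))))
      (fun x => (κ ^ 2 * (2 * x - s - r) ^ 2 + 2 * κ) * Real.exp (κ * ((x - s) * (x - r)))) := by
  have hcont : ∀ g : ℝ → ℝ, Continuous g → ∃ R, ∀ x ∈ Icc a b, |g x| ≤ R := fun g hg =>
    isCompact_Icc.exists_bound_of_continuousOn hg.continuousOn
  obtain ⟨R₁, hR₁⟩ := hcont (fun x => κ * (2 * x - s - r)) (by fun_prop)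
  obtain ⟨R₂, hR₂⟩ := hcont (fun x => κ ^ 2 * (2 * x - s - r) ^ 2 + 2 * κ) (by fun_prop)
  filter_upwards [eventually_gt_atTop (MA * R₂ + MB * R₁ + MC)] with Λ hΛ
  refine ⟨by fun_prop, hasDerivAt_exp_quadratic κ s r, hasDerivAt_deriv_exp_quadratic κ s r,
    fun x _ => (Real.exp_pos _).le, fun t ht x hx => ?_⟩
  have hx' := Ioo_subset_Icc_self hx
  have h1 : |A (Fin.last n) (Fin.last n) t * (κ ^ 2 * (2 * x - s - r) ^ 2 + 2 * κ)| ≤ MA * R₂ := by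
    rw [abs_mul]
    exact mul_le_mul (hMA t ht) (hR₂ x hx') (abs_nonneg _) ((abs_nonneg _).trans (hMA t ht))
  have h2 : |B (Fin.last n) t * (κ * (2 * x - s - r))| ≤ MB * R₁ := by
    rw [abs_mul]
    exact mul_le_mul (hMB t ht) (hR₁ x hx') (abs_nonneg _) ((abs_nonneg _).trans (hMB t ht))
  have h3 := (abs_le.1 h1).2
  have h4 := (abs_le.1 h2).1
  have h5 := (abs_le.1 (hMC t ht)).1
  have := mul_pos (show 0 < - (A (Fin.last n) (Fin.last n) t
      * (κ ^ 2 * (2 * x - s - r) ^ 2 + 2 * κ)) + B (Fin.last n) t * (κ * (2 * x - s - r))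
      + (C t + Λ) by linarith) (Real.exp_pos (κ * ((x - s) * (x - r))))
  linarith

theorem exists_barrierFamily {MA MB MC : ℝ}
    (hMA : ∀ t ∈ Ioo 0 T, |A (Fin.last n) (Fin.last n) t| ≤ MA)
    (hMB : ∀ t ∈ Ioo 0 T, |B (Fin.last n) t| ≤ MB) (hMC : ∀ t ∈ Ioo 0 T, |C t| ≤ MC)
    (K : ℝ) (hI : 2 ≤ I)
    (horder : ∀ l, 1 ≤ l → l + 1 ≤ I →
      aa l < aa (l + 1) ∧ aa (l + 1) < bb l ∧ bb l < bb (l + 1)) :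
    ∃ Λ θ : ℝ, ∃ w w₁ w₂ : ℕ → ℝ → ℝ, 0 < θ ∧ θ < 1 ∧ (∀ t ∈ Ioo 0 T, 0 ≤ C t + Λ) ∧
      (∀ l x, 0 < w l x) ∧
      BarrierFamily A B (fun t => C t + Λ) T K θ I aa bb w w₁ w₂ := by
  set s : ℕ → ℝ := fun l => if l = 1 then (aa 1 + aa 2) / 2 else aa l with hs
  set r : ℕ → ℝ := fun l => if l = I then (bb (I - 1) + bb I) / 2 else bb l with hr
  have hs1 : s 1 = (aa 1 + aa 2) / 2 := by simp [hs]
  have hrI : r I = (bb (I - 1) + bb I) / 2 := by simp [hr]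
  have hsl : ∀ l, 1 ≤ l → s (l + 1) = aa (l + 1) := fun l hl => by
    simp [hs, show l ≠ 0 by omega]
  have hrl : ∀ l, l + 1 ≤ I → r l = bb l := fun l hl => by simp [hr, show l ≠ I by omega]
  have hsn : ∀ l, 1 ≤ l → l + 1 ≤ I → s l < aa (l + 1) := by
    intro l h1 h2
    have := horder l h1 h2
    by_cases h : l = 1
    · subst h; rw [hs1]; norm_num at this ⊢; linarith
    · simp only [hs, h, if_false]; exact this.1
  have hrn : ∀ l, 1 ≤ l → l + 1 ≤ I → bb l < r (l + 1) := by
    intro l h1 h2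
    have := horder l h1 h2
    by_cases h : l + 1 = I
    · subst h; rw [hrI]; norm_num at this ⊢; linarith
    · simp only [hr, h, if_false]; exact this.2.2
  have hsr : ∀ l, 1 ≤ l → l ≤ I → s l < r l := by
    intro l h1 h2
    rcases Nat.lt_or_ge l I with h | h
    · rw [hrl l h]
      exact (hsn l h1 h).trans (horder l h1 h).2.1
    · obtain ⟨j, rfl⟩ : ∃ j, l = j + 1 := ⟨l - 1, by omega⟩
      rw [hsl j (by omega)]
      exact (horder j (by omega) h2).2.1.trans (hrn j (by omega) h2)
  have hbig : ∀ y > 0, ∀ R : ℝ, ∀ᶠ κ : ℝ in atTop, R ≤ Real.exp (κ * y) := fun y hy R =>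
    (Real.tendsto_exp_atTop.comp (tendsto_id.atTop_mul_const hy)).eventually_ge_atTop R
  have hκ : ∀ᶠ κ : ℝ in atTop, ∀ l ∈ Finset.Icc 1 I, 1 < κ * (r l - s l) := by
    rw [Filter.eventually_all_finset]
    intro l hl
    rw [Finset.mem_Icc] at hl
    exact (tendsto_id.atTop_mul_const (sub_pos.2 (hsr l hl.1 hl.2))).eventually_gt_atTop 1
  have hend1 : 0 < (aa 1 - s 1) * (aa 1 - r 1) := by
    have h := horder 1 le_rfl hI
    have h' := hsr 1 le_rfl (by omega)
    norm_num at h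
    exact mul_pos_of_neg_of_neg (by linarith) (by linarith)
  have hendI : 0 < (bb I - s I) * (bb I - r I) := by
    obtain ⟨j, rfl⟩ : ∃ j, I = j + 1 := ⟨I - 1, by omega⟩
    have h := horder j (by omega) le_rfl
    have h' := hsr (j + 1) (by omega) le_rfl
    simp only [Nat.add_sub_cancel] at hrI
    exact mul_pos (by linarith) (by linarith)
  obtain ⟨κ, hκ0, hκl, hκ1, hκI⟩ := ((eventually_gt_atTop (0 : ℝ)).and (hκ.and
    ((hbig _ hend1 (2 * Real.exp (K * (bb 1 - aa 1)))).and
      (hbig _ hendI (2 * Real.exp (K * (bb I - aa I))))))).exists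
  set w : ℕ → ℝ → ℝ := fun l x => Real.exp (κ * ((x - s l) * (x - r l))) with hw
  have hlt : ∀ l x, s l < x → x < r l → w l x < 1 := by
    intro l x h1 h2
    have := mul_pos hκ0 (mul_pos (sub_pos.2 h1) (sub_pos.2 h2))
    rw [hw, Real.exp_lt_one_iff]
    linarith
  have hΛ : ∀ᶠ Λ : ℝ in atTop, ∀ l ∈ Finset.Icc 1 I, Barrier A B (fun t => C t + Λ) T (aa l) (bb l)
      (w l) (fun x => κ * (2 * x - s l - r l) * w l x)
      (fun x => (κ ^ 2 * (2 * x - s l - r l) ^ 2 + 2 * κ) * w l x) := by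
    rw [Filter.eventually_all_finset]
    intro l _
    exact eventually_barrier_exp_quadratic hMA hMB hMC κ _ _ _ _
  have hθ : ∀ᶠ θ : ℝ in nhdsWithin 1 (Iio 1), ∀ l ∈ Finset.Icc 1 (I - 1),
      w l (aa (l + 1)) ≤ θ ∧ w (l + 1) (bb l) ≤ θ := by
    rw [Filter.eventually_all_finset]
    intro l hl
    rw [Finset.mem_Icc] at hl
    have h1 := hl.1
    have h2 : l + 1 ≤ I := by omega
    have ho := horder l h1 h2
    have h3 := hlt l (aa (l + 1)) (hsn l h1 h2) (by rw [hrl l h2]; exact ho.2.1)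
    have h4 := hlt (l + 1) (bb l) (by rw [hsl l h1]; exact ho.2.1) (hrn l h1 h2)
    filter_upwards [Ico_mem_nhdsLT h3, Ico_mem_nhdsLT h4] with θ h5 h6 using ⟨h5.1, h6.1⟩
  obtain ⟨Λ, hΛl, hΛC⟩ := (hΛ.and (eventually_ge_atTop MC)).exists
  obtain ⟨θ, hθl, hθ01⟩ := (hθ.and (Ioo_mem_nhdsLT (zero_lt_one' ℝ))).exists
  have hθl' : ∀ l, 1 ≤ l → l + 1 ≤ I → w l (aa (l + 1)) ≤ θ ∧ w (l + 1) (bb l) ≤ θ :=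
    fun l h1 h2 => hθl l (Finset.mem_Icc.2 ⟨h1, by omega⟩)
  refine ⟨Λ, θ, w, _, _, hθ01.1, hθ01.2, fun t ht => ?_, fun l x => Real.exp_pos _,
    ⟨fun l h1 h2 => hΛl l (Finset.mem_Icc.2 ⟨h1, h2⟩), fun l h1 h2 => ?_, fun l h1 h2 => ?_,
      fun l h1 h2 => (hθl' l h1 h2).1, fun l h1 h2 => ?_, fun l h1 h2 => ?_,
      fun l h1 h2 => (hθl' l h1 h2).2, hκ1, hκI⟩⟩
  · linarith [(abs_le.1 (hMC t ht)).1]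
  · simp [hw, hsl l h1]
  · have := hκl (l + 1) (Finset.mem_Icc.2 ⟨by omega, h2⟩)
    rw [hsl l h1] at this
    simp only [hw, hsl l h1, sub_self, zero_mul, mul_zero, Real.exp_zero]
    linarith
  · simp [hw, hrl l h2]
  · have := hκl l (Finset.mem_Icc.2 ⟨h1, by omega⟩)
    rw [hrl l h2] at this
    simp only [hw, hrl l h2, sub_self, mul_zero, Real.exp_zero]
    linarith

end Iteration

section Error

variable {n : ℕ} {A : Fin (n+1) → Fin (n+1) → ℝ → ℝ} {B : Fin (n+1) → ℝ → ℝ} {C : ℝ → ℝ} {T : ℝ}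
  {D : Set (Fin n → ℝ)} {a b : ℝ}

theorem HomogeneousSolution.exp_mul (hA : ∀ i j t, A i j t = A j i t) (hDo : IsOpen D)
    {F : (Fin (n+1) → ℝ) × ℝ → ℝ} (hF : HomogeneousSolution A B C T D a b F)
    (L : (Fin (n+1) → ℝ) × ℝ →L[ℝ] ℝ) (p Λ : ℝ)
    (hL : ∀ i, L (spaceDir i) = if i = Fin.last n then p else 0) (hLt : L (0, 1) = -Λ) :
    HomogeneousSolution A (fun i t => B i t + 2 * p * A i (Fin.last n) t)
      (fun t => C t - p * B (Fin.last n) t - p ^ 2 * A (Fin.last n) (Fin.last n) t + Λ) T D a b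
      (fun q => Real.exp (L q) * F q) where
  cont := (Real.continuous_exp.comp L.continuous).continuousOn.mul hF.cont
  smooth := (Real.contDiff_exp.comp L.contDiff).contDiffOn.mul hF.smooth
  pde q hq := by
    rw [spaceTimeOp_exp_mul hA ((isOpen_cylinder hDo a b).prod isOpen_Ioo) hF.smooth L p Λ hL hLt hq,
      hF.pde q hq, mul_zero]
  initial x hx := by rw [hF.initial x hx, mul_zero]
  lateral x hx hxD t ht := by rw [hF.lateral x hx hxD t ht, mul_zero]

theorem cylinder_subset_cylinder {a' b' : ℝ} (ha : a ≤ a') (hb : b' ≤ b) :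
    cylinder D a' b' ⊆ cylinder D a b :=
  fun _ hx => ⟨hx.1, Ioo_subset_Ioo ha hb hx.2⟩

theorem mem_frontier_cylinder (hDo : IsOpen D) {x : Fin (n+1) → ℝ}
    (hx : x ∈ closure (cylinder D a b)) (h : Fin.init x ∉ D ∨ x (Fin.last n) ∉ Ioo a b) :
    x ∈ frontier (cylinder D a b) := by
  rw [(isOpen_cylinder hDo a b).frontier_eq]
  exact ⟨hx, fun h' => h.elim (fun h => h h'.1) (fun h => h h'.2)⟩

/-- The difference of two solutions with the same right-hand side, initial and lateral data. -/
theorem homogeneousSolution_sub (hDo : IsOpen D) (hT : 0 < T)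
    {v u : (Fin (n+1) → ℝ) → ℝ → ℝ}
    (hv : ContDiffOn ℝ ∞ (fun q : (Fin (n+1) → ℝ) × ℝ => v q.1 q.2)
      (closure (cylinder D a b) ×ˢ Icc 0 T))
    (hu : ContDiffOn ℝ ∞ (fun q : (Fin (n+1) → ℝ) × ℝ => u q.1 q.2)
      (closure (cylinder D a b) ×ˢ Icc 0 T))
    (hpde : ∀ x ∈ cylinder D a b, ∀ t ∈ Ioo 0 T,
      parabolicOp A B C v x t = parabolicOp A B C u x t)
    (hinit : ∀ x ∈ cylinder D a b, v x 0 = u x 0)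
    (hlat : ∀ x ∈ closure (cylinder D a b), Fin.init x ∉ D → ∀ t ∈ Ioo 0 T, v x t = u x t) :
    HomogeneousSolution A B C T D a b (fun q => v q.1 q.2 - u q.1 q.2) := by
  have hS := isOpen_cylinder hDo a b
  have hO := hS.prod (isOpen_Ioo (a := (0:ℝ)) (b := T))
  have hsub : cylinder D a b ×ˢ Ioo 0 T ⊆ closure (cylinder D a b) ×ˢ Icc 0 T :=
    prod_mono subset_closure Ioo_subset_Icc_self
  refine ⟨hv.continuousOn.sub hu.continuousOn, (hv.sub hu).mono hsub, fun q hq => ?_,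
    fun x hx => ?_, fun x hx hxD t ht => sub_eq_zero.2 (hlat x hx hxD t ht)⟩
  · rw [spaceTimeOp_sub hO (hv.mono hsub) (hu.mono hsub) hq,
      ← parabolicOp_eq_spaceTimeOp hS isOpen_Ioo (hv.mono hsub) hq.1 hq.2,
      ← parabolicOp_eq_spaceTimeOp hS isOpen_Ioo (hu.mono hsub) hq.1 hq.2]
    exact sub_eq_zero.2 (hpde q.1 hq.1 q.2 hq.2)
  · have h0 : (0:ℝ) ∈ Icc 0 T := ⟨le_rfl, hT.le⟩
    have hc : ContinuousOn (fun x => v x 0 - u x 0) (closure (cylinder D a b)) :=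
      (hv.continuousOn.sub hu.continuousOn).comp (f := fun x => (x, (0:ℝ)))
        (by fun_prop) (fun x hx => ⟨hx, h0⟩)
    have hz : EqOn (fun x => v x 0 - u x 0) 0 (cylinder D a b) :=
      fun x hx => sub_eq_zero.2 (hinit x hx)
    exact hz.of_subset_closure hc continuousOn_const subset_closure subset_rfl hx

end Error

theorem bounds_of_overlap {I : ℕ} {aa bb : ℕ → ℝ}
    (horder : ∀ l, 1 ≤ l → l + 1 ≤ I →
      aa l < aa (l + 1) ∧ aa (l + 1) < bb l ∧ bb l < bb (l + 1)) {l : ℕ} (h1 : 1 ≤ l)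
    (h2 : l ≤ I) : aa 1 ≤ aa l ∧ bb l ≤ bb I := by
  constructor
  · induction l, h1 using Nat.le_induction with
    | base => exact le_rfl
    | succ j hj ih => exact (ih (by omega)).trans (horder j hj h2).1.le
  · induction h2 using Nat.decreasingInduction with
    | self => exact le_rfl
    | of_succ j hj ih => exact (horder j h1 hj).2.2.le.trans (ih (by omega))

/-- convergence of the overlapping optimized Schwarz waveform
relaxation method in the weighted uniform norm: there is `Γ > 0` such that for
every strictly positive C¹ weight `ϕ` with `ϕ′ ≤ −Γϕ` on `[0,T]`,
`max_l sup_{cl(Ω_l)×[0,T]} (∂ₙ(u_l^k − u))² e^{2pxₙ} ϕ(t) → 0` as `k → ∞`. -/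
theorem schwarz_method_weighted_uniform_convergence
    {n : ℕ} (T p ν₀ : ℝ) (hT : 0 < T) (hν₀ : 0 < ν₀)
    -- coefficients: symmetric, smooth, bounded, uniformly elliptic on (0,T)
    (a : Fin (n+1) → Fin (n+1) → ℝ → ℝ) (b : Fin (n+1) → ℝ → ℝ) (c : ℝ → ℝ)
    (ha_symm : ∀ i j t, a i j t = a j i t)
    (ha_smooth : ∀ i j, ContDiff ℝ (⊤ : ℕ∞) (a i j))
    (ha_bdd : ∀ i j, ∃ C, ∀ t, |a i j t| ≤ C)
    (hb_smooth : ∀ i, ContDiff ℝ (⊤ : ℕ∞) (b i))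
    (hb_bdd : ∀ i, ∃ C, ∀ t, |b i t| ≤ C)
    (hc_smooth : ContDiff ℝ (⊤ : ℕ∞) c)
    (hc_bdd : ∃ C, ∀ t, |c t| ≤ C)
    (hell : ∀ t ∈ Ioo (0:ℝ) T, ∀ ξ : Fin (n+1) → ℝ,
      ν₀ * ∑ i, ξ i ^ 2 ≤ ∑ i, ∑ j, a i j t * ξ i * ξ j)
    -- geometry: Ω = D × (α,β), overlapping decomposition Ω_l = D × (a_l,b_l)
    (D : Set (Fin n → ℝ)) (hD_open : IsOpen D) (hD_bdd : Bornology.IsBounded D)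
    (hD_ne : D.Nonempty)
    (α β : ℝ) (hαβ : α < β)
    (I : ℕ) (hI : 2 ≤ I)
    (aa bb : ℕ → ℝ) (haa1 : aa 1 = α) (hbbI : bb I = β)
    (horder : ∀ l, 1 ≤ l → l + 1 ≤ I →
      aa l < aa (l + 1) ∧ aa (l + 1) < bb l ∧ bb l < bb (l + 1))
    (Ω : Set (Fin (n+1) → ℝ))
    (hΩ : Ω = {x : Fin (n+1) → ℝ | Fin.init x ∈ D ∧ x (Fin.last n) ∈ Ioo α β})
    (Ωl : ℕ → Set (Fin (n+1) → ℝ))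
    (hΩl : ∀ l, Ωl l =
      {x : Fin (n+1) → ℝ | Fin.init x ∈ D ∧ x (Fin.last n) ∈ Ioo (aa l) (bb l)})
    -- data
    (f g : (Fin (n+1) → ℝ) → ℝ → ℝ)
    (hf_smooth : ContDiffOn ℝ (⊤ : ℕ∞)
      (fun q : (Fin (n+1) → ℝ) × ℝ => f q.1 q.2) (closure Ω ×ˢ Icc 0 T))
    (hf_bdd : ∃ C, ∀ x ∈ closure Ω, ∀ t ∈ Icc (0:ℝ) T, |f x t| ≤ C)
    (hg_smooth : ContDiffOn ℝ (⊤ : ℕ∞)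
      (fun q : (Fin (n+1) → ℝ) × ℝ => g q.1 q.2) (closure Ω ×ˢ Icc 0 T))
    (hg_bdd : ∃ C, ∀ x ∈ closure Ω, ∀ t ∈ Icc (0:ℝ) T, |g x t| ≤ C)
    -- the exact solution u
    (u : (Fin (n+1) → ℝ) → ℝ → ℝ)
    (hu_smooth : ContDiffOn ℝ (⊤ : ℕ∞)
      (fun q : (Fin (n+1) → ℝ) × ℝ => u q.1 q.2) (closure Ω ×ˢ Icc 0 T))
    (hu_bdd : ∃ C, ∀ x ∈ closure Ω, ∀ t ∈ Icc (0:ℝ) T, |u x t| ≤ C)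
    (hu_pde : ∀ x ∈ Ω, ∀ t ∈ Ioo (0:ℝ) T, parabolicOp a b c u x t = f x t)
    (hu_bc : ∀ x ∈ frontier Ω, ∀ t ∈ Ioo (0:ℝ) T, u x t = g x t)
    (hu_ic : ∀ x ∈ Ω, u x 0 = g x 0)
    -- the Schwarz waveform relaxation iterates u_l^k = U k l, k ≥ 1, 1 ≤ l ≤ I
    (U : ℕ → ℕ → (Fin (n+1) → ℝ) → ℝ → ℝ)
    (hU_smooth : ∀ k, 1 ≤ k → ∀ l, 1 ≤ l → l ≤ I →
      ContDiffOn ℝ (⊤ : ℕ∞) (fun q : (Fin (n+1) → ℝ) × ℝ => U k l q.1 q.2)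
        (closure (Ωl l) ×ˢ Icc 0 T))
    (hU_pde : ∀ k, 1 ≤ k → ∀ l, 1 ≤ l → l ≤ I →
      ∀ x ∈ Ωl l, ∀ t ∈ Ioo (0:ℝ) T, parabolicOp a b c (U k l) x t = f x t)
    -- Robin transmission conditions (for k ≥ 2; the first iterates are arbitrary,
    -- coming from an arbitrary smooth bounded initial guess h⁰)
    (hU_robin_left : ∀ k, 2 ≤ k → ∀ l, 2 ≤ l → l ≤ I → ∀ X ∈ D, ∀ t ∈ Ioo (0:ℝ) T,
      fderivWithin ℝ (fun y => U k l y t) (closure (Ωl l))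
          (Fin.snoc X (aa l)) (Pi.single (Fin.last n) 1)
        + p * U k l (Fin.snoc X (aa l)) t
      = fderivWithin ℝ (fun y => U (k - 1) (l - 1) y t) (closure (Ωl (l - 1)))
          (Fin.snoc X (aa l)) (Pi.single (Fin.last n) 1)
        + p * U (k - 1) (l - 1) (Fin.snoc X (aa l)) t)
    (hU_robin_right : ∀ k, 2 ≤ k → ∀ l, 1 ≤ l → l + 1 ≤ I → ∀ X ∈ D, ∀ t ∈ Ioo (0:ℝ) T,
      fderivWithin ℝ (fun y => U k l y t) (closure (Ωl l))
          (Fin.snoc X (bb l)) (Pi.single (Fin.last n) 1)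
        + p * U k l (Fin.snoc X (bb l)) t
      = fderivWithin ℝ (fun y => U (k - 1) (l + 1) y t) (closure (Ωl (l + 1)))
          (Fin.snoc X (bb l)) (Pi.single (Fin.last n) 1)
        + p * U (k - 1) (l + 1) (Fin.snoc X (bb l)) t)
    -- inherited boundary and initial conditions
    (hU_bc : ∀ k, 1 ≤ k → ∀ l, 1 ≤ l → l ≤ I →
      ∀ x ∈ frontier (Ωl l) ∩ frontier Ω, ∀ t ∈ Ioo (0:ℝ) T, U k l x t = g x t)
    (hU_ic : ∀ k, 1 ≤ k → ∀ l, 1 ≤ l → l ≤ I → ∀ x ∈ Ωl l, U k l x 0 = g x 0)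
    -- special treatment of the extreme subdomains
    (hU_left_end : ∀ k, 1 ≤ k → ∀ X ∈ D, ∀ t ∈ Ioo (0:ℝ) T,
      U k 1 (Fin.snoc X α) t = g (Fin.snoc X α) t)
    (hU_right_end : ∀ k, 1 ≤ k → ∀ X ∈ D, ∀ t ∈ Ioo (0:ℝ) T,
      U k I (Fin.snoc X β) t = g (Fin.snoc X β) t) :
    ∃ Γ : ℝ, 0 < Γ ∧
      ∀ ϕ : ℝ → ℝ, ContDiff ℝ 1 ϕ →
        (∀ t ∈ Icc (0:ℝ) T, 0 < ϕ t) →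
        (∀ t ∈ Icc (0:ℝ) T, deriv ϕ t ≤ -Γ * ϕ t) →
        Tendsto
          (fun k =>
            sSup {y : ℝ | ∃ l, 1 ≤ l ∧ l ≤ I ∧ ∃ x ∈ closure (Ωl l), ∃ t ∈ Icc (0:ℝ) T,
              y = (fderivWithin ℝ (fun z => U k l z t - u z t) (closure (Ωl l)) x
                    (Pi.single (Fin.last n) 1)) ^ 2
                  * Real.exp (2 * p * x (Fin.last n)) * ϕ t})
          atTop (nhds 0) := by
  obtain rfl : Ω = cylinder D α β := hΩ
  obtain rfl : Ωl = fun l => cylinder D (aa l) (bb l) := funext hΩl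
  subst haa1 hbbI
  beta_reduce at *
  have hab : ∀ l, 1 ≤ l → l ≤ I → aa l < bb l := fun l => lt_of_overlap hI horder
  have hbd : ∀ l, 1 ≤ l → l ≤ I → aa 1 ≤ aa l ∧ bb l ≤ bb I := fun l => bounds_of_overlap horder
  have hsub : ∀ l, 1 ≤ l → l ≤ I → cylinder D (aa l) (bb l) ⊆ cylinder D (aa 1) (bb I) :=
    fun l h1 h2 => cylinder_subset_cylinder (hbd l h1 h2).1 (hbd l h1 h2).2
  -- bounds on the coefficients of the transformed operator
  choose CA hCA using ha_bdd
  choose CB hCB using hb_bdd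
  obtain ⟨CC, hCC⟩ := hc_bdd
  set N := Fin.last n with hN
  have hMB : ∀ t ∈ Ioo 0 T, |b N t + 2 * p * a N N t| ≤ CB N + 2 * |p| * CA N N := fun t _ => by
    refine (abs_add_le _ _).trans (add_le_add (hCB N t) ?_)
    rw [abs_mul, abs_mul, abs_two]
    exact mul_le_mul_of_nonneg_left (hCA N N t) (by positivity)
  have hMC : ∀ t ∈ Ioo 0 T, |c t - p * b N t - p ^ 2 * a N N t|
      ≤ CC + |p| * CB N + p ^ 2 * CA N N := fun t _ => by
    refine (abs_sub _ _).trans (add_le_add ((abs_sub _ _).trans (add_le_add (hCC t) ?_)) ?_)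
    · rw [abs_mul]
      exact mul_le_mul_of_nonneg_left (hCB N t) (abs_nonneg p)
    · rw [abs_mul, abs_of_nonneg (sq_nonneg p)]
      exact mul_le_mul_of_nonneg_left (hCA N N t) (sq_nonneg p)
  have hν : ∀ t ∈ Ioo 0 T, ν₀ ≤ a N N t := fun t ht => by
    simpa [Pi.single_apply] using hell t ht (Pi.single N 1)
  have hA : DegenerateElliptic a T :=
    ⟨ha_symm, fun t ht ξ => (mul_nonneg hν₀.le (Finset.sum_nonneg fun i _ => sq_nonneg _)).trans
      (hell t ht ξ)⟩
  have hMB0 : 0 ≤ CB N + 2 * |p| * CA N N :=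
    add_nonneg ((abs_nonneg _).trans (hCB N 0))
      (mul_nonneg (by positivity) ((abs_nonneg _).trans (hCA N N 0)))
  set K : ℝ := (CB N + 2 * |p| * CA N N + 1) / ν₀
  have hK : 0 < K := by positivity
  have hAB : ∀ t ∈ Ioo 0 T, |b N t + 2 * p * a N N t| < K * a N N t := fun t ht => by
    have h1 : K * ν₀ = CB N + 2 * |p| * CA N N + 1 := div_mul_cancel₀ _ hν₀.ne'
    have h2 := mul_le_mul_of_nonneg_left (hν t ht) hK.le
    linarith [hMB t ht]
  obtain ⟨Λ, θ, w, w₁, w₂, hθ0, hθ1, hC, hwpos, hw⟩ :=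
    exists_barrierFamily (A := a) (B := fun i t => b i t + 2 * p * a i N t)
      (C := fun t => c t - p * b N t - p ^ 2 * a N N t)
      (fun t _ => hCA N N t) hMB hMC K hI horder
  -- the exponentially weighted error and its derivative in the last variable
  obtain ⟨L, hLq⟩ : ∃ L : (Fin (n+1) → ℝ) × ℝ →L[ℝ] ℝ, ∀ q, L q = p * q.1 N - Λ * q.2 :=
    ⟨p • (ContinuousLinearMap.proj (R := ℝ) (φ := fun _ : Fin (n+1) => ℝ) N).comp
        (ContinuousLinearMap.fst ℝ (Fin (n+1) → ℝ) ℝ)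
      - Λ • ContinuousLinearMap.snd ℝ (Fin (n+1) → ℝ) ℝ, fun q => by simp⟩
  have hL : ∀ i, L (spaceDir i) = if i = N then p else 0 := fun i => by
    rw [hLq]
    simp [spaceDir, Pi.single_apply, eq_comm (a := N)]
  have hLt : L (0, 1) = -Λ := by rw [hLq]; simp
  have hLN : L (spaceDir N) = p := by simp [hL]
  set Du := lastDerivWithin (closure (cylinder D (aa 1) (bb I))) fun q => u q.1 q.2
  set DU : ℕ → ℕ → (Fin (n+1) → ℝ) × ℝ → ℝ := fun k l =>
    lastDerivWithin (closure (cylinder D (aa l) (bb l))) fun q => U k l q.1 q.2 with hDU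
  set F : ℕ → ℕ → (Fin (n+1) → ℝ) × ℝ → ℝ := fun k l q =>
    Real.exp (L q) * (U k l q.1 q.2 - u q.1 q.2) with hFdef
  set V : ℕ → ℕ → (Fin (n+1) → ℝ) × ℝ → ℝ := fun k l q =>
    Real.exp (L q) * ((DU k l q - Du q) + p * (U k l q.1 q.2 - u q.1 q.2)) with hVdef
  have hul : ∀ l, 1 ≤ l → l ≤ I → closure (cylinder D (aa l) (bb l)) ×ˢ Icc 0 T
      ⊆ closure (cylinder D (aa 1) (bb I)) ×ˢ Icc 0 T := fun l h1 h2 =>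
    prod_mono (closure_mono (hsub l h1 h2)) subset_rfl
  have hlatU : ∀ k, 1 ≤ k → ∀ l, 1 ≤ l → l ≤ I → ∀ x ∈ closure (cylinder D (aa l) (bb l)),
      Fin.init x ∉ D → ∀ t ∈ Ioo 0 T, U k l x t = u x t := by
    intro k hk l h1 h2 x hx hxD t ht
    have hxΩ := mem_frontier_cylinder hD_open (closure_mono (hsub l h1 h2) hx) (Or.inl hxD)
    rw [hU_bc k hk l h1 h2 x ⟨mem_frontier_cylinder hD_open hx (Or.inl hxD), hxΩ⟩ t ht,
      hu_bc x hxΩ t ht]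
  have hF : ∀ k, 1 ≤ k → ∀ l, 1 ≤ l → l ≤ I →
      HomogeneousSolution a (fun i t => b i t + 2 * p * a i N t)
        (fun t => c t - p * b N t - p ^ 2 * a N N t + Λ) T D (aa l) (bb l) (F k l) := by
    intro k hk l h1 h2
    refine (homogeneousSolution_sub hD_open hT (hU_smooth k hk l h1 h2)
      (hu_smooth.mono (hul l h1 h2)) (fun x hx t ht => ?_) (fun x hx => ?_)
      (hlatU k hk l h1 h2)).exp_mul ha_symm hD_open L p Λ hL hLt
    · rw [hU_pde k hk l h1 h2 x hx t ht, hu_pde x (hsub l h1 h2 hx) t ht]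
    · rw [hU_ic k hk l h1 h2 x hx, hu_ic x (hsub l h1 h2 hx)]
  have hE : ∀ k, 1 ≤ k → ∀ l, 1 ≤ l → l ≤ I →
      HasLastDeriv T D (aa l) (bb l) (fun q => U k l q.1 q.2 - u q.1 q.2)
        (fun q => DU k l q - Du q) := fun k hk l h1 h2 =>
    (hasLastDeriv_lastDerivWithin (hab l h1 h2) (hU_smooth k hk l h1 h2)).sub
      ((hasLastDeriv_lastDerivWithin hαβ hu_smooth).mono hαβ (hab l h1 h2) (hbd l h1 h2).1
        (hbd l h1 h2).2)
  have hV : ∀ k, 1 ≤ k → ∀ l, 1 ≤ l → l ≤ I →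
      HasLastDeriv T D (aa l) (bb l) (F k l) (V k l) := by
    intro k hk l h1 h2
    have h := (hE k hk l h1 h2).exp_mul L
    rwa [← hN, hLN] at h
  have hVc : ∀ k, 1 ≤ k → ∀ l, 1 ≤ l → l ≤ I →
      ContinuousOn (V k l) (closure (cylinder D (aa l) (bb l)) ×ˢ Icc 0 T) := by
    intro k hk l h1 h2
    have hUc := (hU_smooth k hk l h1 h2).continuousOn
    have huc := (hu_smooth.mono (hul l h1 h2)).continuousOn
    have hDUc := continuousOn_lastDerivWithin (hab l h1 h2) (hU_smooth k hk l h1 h2)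
    have hDuc := (continuousOn_lastDerivWithin hαβ hu_smooth).mono (hul l h1 h2)
    exact (Real.continuous_exp.comp L.continuous).continuousOn.mul
      ((hDUc.sub hDuc).add (continuousOn_const.mul (hUc.sub huc)))
  have hsnoc : ∀ {x : Fin (n+1) → ℝ} {s : ℝ}, x N = s →
      (Fin.snoc (Fin.init x) s : Fin (n+1) → ℝ) = x := fun {x s} h => by
    rw [← h]; exact Fin.snoc_init_self x
  have hleft : ∀ k, 1 ≤ k → ∀ l, 1 ≤ l → l + 1 ≤ I → ∀ x : Fin (n+1) → ℝ, Fin.init x ∈ D →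
      x N = aa (l + 1) → ∀ t ∈ Ioo 0 T, V (k + 1) (l + 1) (x, t) = V k l (x, t) := by
    intro k hk l h1 h2 x hx hxl t ht
    have h := hU_robin_left (k + 1) (by omega) (l + 1) (by omega) h2 _ hx t ht
    rw [hsnoc hxl] at h
    simp only [Nat.add_sub_cancel] at h
    simp only [hVdef, hDU, lastDerivWithin]
    congr 1
    linarith
  have hright : ∀ k, 1 ≤ k → ∀ l, 1 ≤ l → l + 1 ≤ I → ∀ x : Fin (n+1) → ℝ, Fin.init x ∈ D →
      x N = bb l → ∀ t ∈ Ioo 0 T, V (k + 1) l (x, t) = V k (l + 1) (x, t) := by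
    intro k hk l h1 h2 x hx hxl t ht
    have h := hU_robin_right (k + 1) (by omega) l h1 h2 _ hx t ht
    rw [hsnoc hxl] at h
    simp only [Nat.add_sub_cancel] at h
    simp only [hVdef, hDU, lastDerivWithin]
    congr 1
    linarith
  have hleft_end : ∀ k, 1 ≤ k → ∀ x : Fin (n+1) → ℝ, Fin.init x ∈ D → x N = aa 1 →
      ∀ t ∈ Ioo 0 T, F k 1 (x, t) = 0 := by
    intro k hk x hx hxl t ht
    have h := hU_left_end k hk _ hx t ht
    rw [hsnoc hxl] at h
    have hxΩ : x ∈ frontier (cylinder D (aa 1) (bb I)) := mem_frontier_cylinder hD_open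
      (mem_closure_of_init_mem hαβ hx (by rw [← hN, hxl]; exact ⟨le_rfl, hαβ.le⟩))
      (Or.inr (by rw [← hN, hxl]; simp))
    simp [hFdef, h, hu_bc x hxΩ t ht]
  have hright_end : ∀ k, 1 ≤ k → ∀ x : Fin (n+1) → ℝ, Fin.init x ∈ D → x N = bb I →
      ∀ t ∈ Ioo 0 T, F k I (x, t) = 0 := by
    intro k hk x hx hxl t ht
    have h := hU_right_end k hk _ hx t ht
    rw [hsnoc hxl] at h
    have hxΩ : x ∈ frontier (cylinder D (aa 1) (bb I)) := mem_frontier_cylinder hD_open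
      (mem_closure_of_init_mem hαβ hx (by rw [← hN, hxl]; exact ⟨hαβ.le, le_rfl⟩))
      (Or.inr (by rw [← hN, hxl]; simp))
    simp [hFdef, h, hu_bc x hxΩ t ht]
  -- geometric decay of the iterates
  have hcpt : ∀ l, 1 ≤ l → l ≤ I → IsCompact (closure (cylinder D (aa l) (bb l)) ×ˢ Icc 0 T) :=
    fun l h1 h2 => (isCompact_closure_cylinder hD_bdd (hab l h1 h2)).prod isCompact_Icc
  have hwc : ∀ l, 1 ≤ l → l ≤ I →
      Continuous fun q : (Fin (n+1) → ℝ) × ℝ => w l (q.1 N) := fun l h1 h2 =>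
    (hw.barrier l h1 h2).smooth.continuous.comp (by fun_prop)
  obtain ⟨M, hM0, hM⟩ : ∃ M > 0, ∀ l, 1 ≤ l → l ≤ I →
      ∀ x ∈ closure (cylinder D (aa l) (bb l)), ∀ t ∈ Icc 0 T,
        |V 1 l (x, t)| ≤ M * w l (x N) := by
    have h : ∀ᶠ M : ℝ in atTop, ∀ l ∈ Finset.Icc 1 I,
        ∀ x ∈ closure (cylinder D (aa l) (bb l)), ∀ t ∈ Icc 0 T,
          |V 1 l (x, t)| ≤ M * w l (x N) := by
      rw [Filter.eventually_all_finset]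
      intro l hl
      rw [Finset.mem_Icc] at hl
      obtain ⟨R, hR⟩ := (hcpt l hl.1 hl.2).exists_bound_of_continuousOn
        ((hVc 1 le_rfl l hl.1 hl.2).div (hwc l hl.1 hl.2).continuousOn fun q _ => (hwpos l _).ne')
      filter_upwards [eventually_ge_atTop R] with M hM x hx t ht
      have h : ‖V 1 l (x, t) / w l (x N)‖ ≤ M := (hR (x, t) ⟨hx, ht⟩).trans hM
      rwa [Real.norm_eq_abs, abs_div, abs_of_pos (hwpos l _), div_le_iff₀ (hwpos l _)] at h
    obtain ⟨M, hM, hM0⟩ := (h.and (eventually_gt_atTop 0)).exists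
    exact ⟨M, hM0, fun l h1 h2 => hM l (Finset.mem_Icc.2 ⟨h1, h2⟩)⟩
  have hVbound : ∀ k, ∀ l, 1 ≤ l → l ≤ I →
      ∀ x ∈ closure (cylinder D (aa l) (bb l)), ∀ t ∈ Icc 0 T,
        |V (k + 1) l (x, t)| ≤ θ ^ k * M * w l (x N) := by
    intro k
    induction k with
    | zero => simpa using hM
    | succ k ih =>
      have h := hw.abs_lastDeriv_le hA hC hD_open hD_bdd hT hK hAB hI horder hθ0
        (hF (k + 2) (by omega)) (hV (k + 2) (by omega)) (hVc (k + 2) (by omega))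
        (hleft (k + 1) (by omega)) (hright (k + 1) (by omega)) (hleft_end (k + 2) (by omega))
        (hright_end (k + 2) (by omega)) (m := θ ^ k * M) (by positivity) ih
      simpa only [pow_succ', mul_assoc] using h
  have hFbound : ∀ k, ∀ l, 1 ≤ l → l ≤ I →
      ∀ x ∈ closure (cylinder D (aa l) (bb l)), ∀ t ∈ Icc 0 T,
        |F (k + 1) l (x, t)| ≤ θ ^ k * M * w l (x N) := fun k =>
    hw.abs_le hA hC hD_open hD_bdd hI horder (hF (k + 1) (by omega)) (hV (k + 1) (by omega))
      (hleft_end (k + 1) (by omega)) (hright_end (k + 1) (by omega)) (by positivity) (hVbound k)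
  obtain ⟨W, hW0, hW⟩ : ∃ W > 0, ∀ l, 1 ≤ l → l ≤ I →
      ∀ x ∈ closure (cylinder D (aa l) (bb l)), w l (x N) ≤ W := by
    have h : ∀ᶠ W : ℝ in atTop, ∀ l ∈ Finset.Icc 1 I,
        ∀ x ∈ closure (cylinder D (aa l) (bb l)), w l (x N) ≤ W := by
      rw [Filter.eventually_all_finset]
      intro l hl
      rw [Finset.mem_Icc] at hl
      obtain ⟨R, hR⟩ := (hcpt l hl.1 hl.2).exists_bound_of_continuousOn
        (hwc l hl.1 hl.2).continuousOn
      filter_upwards [eventually_ge_atTop R] with W hW x hx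
      exact (le_abs_self _).trans ((hR (x, 0) ⟨hx, ⟨le_rfl, hT.le⟩⟩).trans hW)
    obtain ⟨W, hW, hW0⟩ := (h.and (eventually_gt_atTop 0)).exists
    exact ⟨W, hW0, fun l h1 h2 => hW l (Finset.mem_Icc.2 ⟨h1, h2⟩)⟩
  refine ⟨1, one_pos, fun ϕ hϕ hϕpos _ => ?_⟩
  obtain ⟨R, hR⟩ := isCompact_Icc.exists_bound_of_continuousOn
    (s := Icc (0:ℝ) T) (f := fun t => Real.exp (Λ * t) ^ 2 * ϕ t)
    (by have := hϕ.continuous; fun_prop)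
  have hR0 : 0 ≤ R := (norm_nonneg _).trans (hR 0 ⟨le_rfl, hT.le⟩)
  rw [← tendsto_add_atTop_iff_nat 1]
  have hlim : Tendsto (fun k : ℕ => ((1 + |p|) * (θ ^ k * M * W)) ^ 2 * R) atTop (nhds 0) := by
    have h := tendsto_pow_atTop_nhds_zero_of_lt_one hθ0.le hθ1
    simpa using ((((h.mul_const M).mul_const W).const_mul (1 + |p|)).pow 2).mul_const R
  refine squeeze_zero (fun k => Real.sSup_nonneg ?_) (fun k => Real.sSup_le ?_ (by positivity)) hlim
  · rintro y ⟨l, h1, h2, x, hx, t, ht, rfl⟩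
    have := (hϕpos t ht).le
    positivity
  · rintro y ⟨l, h1, h2, x, hx, t, ht, rfl⟩
    have hm : 0 ≤ θ ^ k * M := by positivity
    have hVx := (hVbound k l h1 h2 x hx t ht).trans (mul_le_mul_of_nonneg_left (hW l h1 h2 x hx) hm)
    have hFx := (hFbound k l h1 h2 x hx t ht).trans (mul_le_mul_of_nonneg_left (hW l h1 h2 x hx) hm)
    have hdiff : |V (k + 1) l (x, t) - p * F (k + 1) l (x, t)|
        ≤ (1 + |p|) * (θ ^ k * M * W) := by
      refine (abs_sub _ _).trans ?_
      rw [abs_mul p]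
      have := mul_le_mul_of_nonneg_left hFx (abs_nonneg p)
      linarith
    have hD : fderivWithin ℝ (fun z => U (k + 1) l z t - u z t)
        (closure (cylinder D (aa l) (bb l))) x (Pi.single N 1) = DU (k + 1) l (x, t) - Du (x, t) :=
      HasLastDeriv.unique (hab l h1 h2) hx ht
        (hasLastDeriv_lastDerivWithin (hab l h1 h2)
          ((hU_smooth (k + 1) (by omega) l h1 h2).sub (hu_smooth.mono (hul l h1 h2))))
        (hE (k + 1) (by omega) l h1 h2)
    have hkey : (DU (k + 1) l (x, t) - Du (x, t)) ^ 2 * Real.exp (2 * p * x N) * ϕ t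
        = (V (k + 1) l (x, t) - p * F (k + 1) l (x, t)) ^ 2 * (Real.exp (Λ * t) ^ 2 * ϕ t) := by
      have h3 : Real.exp (2 * p * x N) = (Real.exp (L (x, t)) * Real.exp (Λ * t)) ^ 2 := by
        rw [← Real.exp_add, ← Real.exp_nat_mul, hLq]
        congr 1
        push_cast
        ring
      rw [h3]
      simp only [hVdef, hFdef]
      ring
    rw [hD, hkey]
    exact mul_le_mul (sq_le_sq' (abs_le.1 hdiff).1 (abs_le.1 hdiff).2)
      ((le_abs_self _).trans (hR t ht)) (mul_nonneg (sq_nonneg _) (hϕpos t ht).le) (sq_nonneg _)
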